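/- arXiv:2603.25113 — 3 statements merged into one kernel-verified Lean document; each statement's English description precedes it below -/
import Mathlib

section
/- Every 2-saturated subcubic graph in which every 3-vertex lies on a triangle admits a (1,1,2)-packing coloring. -/
open SimpleGraph

/-- `c` is an `S`-packing coloring of `G` for the sequence `s`: vertices sharing
color `i` are at distance greater than `s i`. -/
def IsPackingColoring {V : Type*} (G : SimpleGraph V) {m : ℕ} (s : Fin m → ℕ)
    (c : V → Fin m) : Prop :=
  ∀ u v : V, u ≠ v → c u = c v → G.Reachable u v → s (c u) < G.dist u v

/-- `G` is subcubic: every vertex has degree at most 3. -/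
def Subcubic {V : Type*} [Fintype V] (G : SimpleGraph V) [DecidableRel G.Adj] : Prop :=
  ∀ v : V, G.degree v ≤ 3

/-- `G` is `k`-saturated: every 3-vertex is adjacent to at most `k` 3-vertices. -/
def Saturated {V : Type*} [Fintype V] (G : SimpleGraph V) [DecidableRel G.Adj] (k : ℕ) : Prop :=
  ∀ v : V, G.degree v = 3 →
    ((G.neighborFinset v).filter (fun u => G.degree u = 3)).card ≤ k

namespace P112
variable {V : Type*}

theorem split_walk (H : SimpleGraph V) {u v : V} (p : H.Walk u v) (hp : ¬ p.IsPath) :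
    ∃ (x : V) (q : H.Walk x x) (r : H.Walk u v), 0 < q.length ∧ q.length + r.length = p.length := by
  classical
  induction p with
  | nil => simp at hp
  | @cons a b c h p ih =>
    by_cases h1 : p.IsPath
    · have h2 : a ∈ p.support := by
        by_contra h3
        exact hp (by simp [SimpleGraph.Walk.cons_isPath_iff, h1, h3])
      refine ⟨a, SimpleGraph.Walk.cons h (p.takeUntil a h2), p.dropUntil a h2, by simp, ?_⟩
      have := congrArg SimpleGraph.Walk.length (p.take_spec h2)
      simp only [SimpleGraph.Walk.length_append] at this
      simp only [SimpleGraph.Walk.length_cons]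
      omega
    · obtain ⟨x, q, r, h3, h4⟩ := ih h1
      exact ⟨x, q, SimpleGraph.Walk.cons h r, h3, by simp only [SimpleGraph.Walk.length_cons]; omega⟩

theorem odd_cycle_aux (H : SimpleGraph V) : ∀ (n : ℕ) (u : V) (w : H.Walk u u), w.length = n → Odd n →
    ∃ (x : V) (c : H.Walk x x), c.IsCycle ∧ Odd c.length := by
  intro n
  induction n using Nat.strong_induction_on with
  | _ n ih =>
    intro u w hw hn
    cases w with
    | nil => simp at hw; subst hw; simp at hn
    | @cons _ b _ h p =>
      simp only [SimpleGraph.Walk.length_cons] at hw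
      by_cases h1 : p.IsPath
      · refine ⟨u, SimpleGraph.Walk.cons h p, ?_, by simpa [hw] using hn⟩
        rw [SimpleGraph.Walk.cons_isCycle_iff]
        refine ⟨h1, fun h2 => ?_⟩
        have h3 : p.length = 1 := by
          cases p with
          | nil => simp at h2
          | @cons _ d _ h' q =>
            rw [SimpleGraph.Walk.cons_isPath_iff] at h1
            simp only [SimpleGraph.Walk.edges_cons, List.mem_cons] at h2
            rcases h2 with h2 | h2
            · have : u = d := by
                have := h.ne
                simp at h2
                grind
              subst this
              have := h1.1
              simp at this
              simp [this]
            · exact absurd (q.snd_mem_support_of_mem_edges h2) h1.2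
        rw [h3] at hw
        subst hw
        exact absurd hn (by decide)
      · obtain ⟨x, q, r, h3, h4⟩ := split_walk H p h1
        rcases Nat.even_or_odd q.length with h5 | h5
        · exact ih (r.length + 1) (by omega) u (SimpleGraph.Walk.cons h r) (by simp) (by
            subst hw
            rw [← h4] at hn
            grind)
        · exact ih q.length (by omega) x q rfl h5

theorem odd_cycle (H : SimpleGraph V) (h : ¬ H.Colorable 2) :
    ∃ (x : V) (c : H.Walk x x), c.IsCycle ∧ Odd c.length := by
  rw [SimpleGraph.two_colorable_iff_forall_loop_even] at h
  push Not at h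
  obtain ⟨u, w, hw⟩ := h
  exact odd_cycle_aux H _ u w rfl (Nat.not_even_iff_odd.mp hw)

/-- two distinct cycle-neighbours -/
theorem cycle_nbrs (H : SimpleGraph V) {x v : V} (c : H.Walk x x) (hc : c.IsCycle)
    (hv : v ∈ c.support) : ∃ y z, y ≠ z ∧ H.Adj v y ∧ H.Adj v z ∧ y ∈ c.support ∧ z ∈ c.support ∧
      s(v, y) ∈ c.edges ∧ s(v, z) ∈ c.edges := by
  have h := hc.ncard_neighborSet_toSubgraph_eq_two hv
  obtain ⟨y, z, hyz, h⟩ := Set.ncard_eq_two.mp h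
  have hy : c.toSubgraph.Adj v y := by
    have : y ∈ c.toSubgraph.neighborSet v := by rw [h]; simp
    exact this
  have hz : c.toSubgraph.Adj v z := by
    have : z ∈ c.toSubgraph.neighborSet v := by rw [h]; simp
    exact this
  have ey := (SimpleGraph.Walk.mem_edges_toSubgraph c (e := s(v, y))).mp hy
  have ez := (SimpleGraph.Walk.mem_edges_toSubgraph c (e := s(v, z))).mp hz
  exact ⟨y, z, hyz, hy.adj_sub, hz.adj_sub, c.snd_mem_support_of_mem_edges ey,
    c.snd_mem_support_of_mem_edges ez, ey, ez⟩

/-- the graph minus the set `C` -/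
def del (G : SimpleGraph V) (C : Set V) : SimpleGraph V where
  Adj u v := G.Adj u v ∧ u ∉ C ∧ v ∉ C
  symm := ⟨fun _ _ h => ⟨h.1.symm, h.2.2, h.2.1⟩⟩
  loopless := ⟨fun _ h => G.loopless.irrefl _ h.1⟩

def D3 (G : SimpleGraph V) (v : V) : Prop :=
  ∃ x y z, x ≠ y ∧ x ≠ z ∧ y ≠ z ∧ G.Adj v x ∧ G.Adj v y ∧ G.Adj v z

structure Hyp (G : SimpleGraph V) : Prop where
  sub : ∀ v x y z w, G.Adj v x → G.Adj v y → G.Adj v z → G.Adj v w →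
    x ≠ y → x ≠ z → y ≠ z → w = x ∨ w = y ∨ w = z
  sat : ∀ v x y z, G.Adj v x → G.Adj v y → G.Adj v z → x ≠ y → x ≠ z → y ≠ z →
    D3 G x → D3 G y → D3 G z → False
  tri : ∀ v, D3 G v → ∃ a b, G.Adj v a ∧ G.Adj v b ∧ G.Adj a b

theorem mkHyp [Fintype V] (G : SimpleGraph V) [DecidableRel G.Adj]
    (hsub : Subcubic G) (hsat : Saturated G 2)
    (hgirth : ∀ v : V, G.degree v = 3 → ∃ a b : V, G.Adj v a ∧ G.Adj v b ∧ G.Adj a b) : Hyp G := by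
  classical
  have key : ∀ v x y z, G.Adj v x → G.Adj v y → G.Adj v z → x ≠ y → x ≠ z → y ≠ z →
      G.neighborFinset v = {x, y, z} ∧ G.degree v = 3 := by
    intro v x y z hx hy hz h1 h2 h3
    have hc : ({x, y, z} : Finset V).card = 3 := by
      rw [Finset.card_eq_three]; exact ⟨x, y, z, h1, h2, h3, rfl⟩
    have hs : ({x, y, z} : Finset V) ⊆ G.neighborFinset v := by
      intro w hw
      simp only [Finset.mem_insert, Finset.mem_singleton] at hw
      rw [SimpleGraph.mem_neighborFinset]
      rcases hw with rfl | rfl | rfl <;> assumption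
    have hd : (G.neighborFinset v).card ≤ 3 := hsub v
    have he := Finset.eq_of_subset_of_card_le hs (by omega)
    refine ⟨he.symm, ?_⟩
    rw [← SimpleGraph.card_neighborFinset_eq_degree, ← he, hc]
  have kd : ∀ v, D3 G v → G.degree v = 3 := by
    rintro v ⟨x, y, z, h1, h2, h3, hx, hy, hz⟩
    exact (key v x y z hx hy hz h1 h2 h3).2
  refine ⟨?_, ?_, fun v hv => hgirth v (kd v hv)⟩
  · intro v x y z w hx hy hz hw h1 h2 h3
    have := (key v x y z hx hy hz h1 h2 h3).1
    have hw' : w ∈ G.neighborFinset v := by rw [SimpleGraph.mem_neighborFinset]; exact hw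
    rw [this] at hw'
    simpa using hw'
  · intro v x y z hx hy hz h1 h2 h3 dx dy dz
    obtain ⟨e, d⟩ := key v x y z hx hy hz h1 h2 h3
    have := hsat v d
    rw [e, Finset.filter_true_of_mem (by
      intro w hw
      simp only [Finset.mem_insert, Finset.mem_singleton] at hw
      rcases hw with rfl | rfl | rfl <;> exact kd _ (by assumption))] at this
    have hc : ({x, y, z} : Finset V).card = 3 := by
      rw [Finset.card_eq_three]; exact ⟨x, y, z, h1, h2, h3, rfl⟩
    omega

structure Good (G : SimpleGraph V) (C : Set V) : Prop where
  nadj : ∀ x ∈ C, ∀ y ∈ C, ¬ G.Adj x y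
  ncom : ∀ x ∈ C, ∀ y ∈ C, x ≠ y → ∀ z, G.Adj x z → G.Adj y z → False
  hit : ∀ x y z, G.Adj x y → G.Adj x z → G.Adj y z → x ∈ C ∨ y ∈ C ∨ z ∈ C

theorem finish (G : SimpleGraph V) (C : Set V) (hC : Good G C) (h : (del G C).Colorable 2) :
    ∃ c : V → Fin 3, IsPackingColoring G ![1, 1, 2] c := by
  classical
  obtain ⟨f⟩ := h
  refine ⟨fun v => if v ∈ C then 2 else (f v).castSucc, ?_⟩
  intro u v huv hc hr
  obtain ⟨w, hw⟩ := hr.exists_walk_length_eq_dist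
  have h0 : G.dist u v ≠ 0 := by rw [Ne, hr.dist_eq_zero_iff]; exact huv
  by_cases hu : u ∈ C
  · have hv : v ∈ C := by
      by_contra hv
      simp only [hu, hv, if_true, if_false] at hc
      have := congrArg Fin.val hc
      simp at this
      omega
    simp only [hu, if_true]
    show 2 < _
    have h1 : G.dist u v ≠ 1 := by
      rw [Ne, SimpleGraph.dist_eq_one_iff_adj]; exact hC.nadj u hu v hv
    have h2 : G.dist u v ≠ 2 := by
      intro h2
      rw [h2] at hw
      cases w with
      | nil => simp at hw
      | cons h p =>
        cases p with
        | nil => simp at hw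
        | cons h' q =>
          cases q with
          | nil => exact hC.ncom u hu v hv huv _ h h'.symm
          | cons _ _ => simp at hw
    omega
  · have hv : v ∉ C := by
      intro hv
      simp only [hu, hv, if_true, if_false] at hc
      have := congrArg Fin.val hc
      simp at this
      omega
    simp only [hu, hv, if_false] at hc ⊢
    have hf : f u = f v := Fin.castSucc_injective _ hc
    have h1 : G.dist u v ≠ 1 := by
      rw [Ne, SimpleGraph.dist_eq_one_iff_adj]
      intro ha
      exact f.valid (show (del G C).Adj u v from ⟨ha, hu, hv⟩) hf
    have : (![1, 1, 2] : Fin 3 → ℕ) (f u).castSucc = 1 := by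
      generalize f u = i
      fin_cases i <;> rfl
    rw [this]
    omega

def Bad (G : SimpleGraph V) (C : Set V) : Set V :=
  {v | ∃ (x : V) (c : (del G C).Walk x x), c.IsCycle ∧ Odd c.length ∧ v ∈ c.support}
end P112
namespace P112
variable {V : Type*}

theorem reach_closed (H : SimpleGraph V) (Q : Set V) (hQ : ∀ u ∈ Q, ∀ w, H.Adj u w → w ∈ Q)
    {u w : V} (h : H.Reachable u w) (hu : u ∈ Q) : w ∈ Q := by
  obtain ⟨p⟩ := h
  induction p with
  | nil => exact hu
  | cons h p ih => exact ih (hQ _ hu _ h)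

theorem bad_of (G : SimpleGraph V) (C C' : Set V) {x : V} (c : (del G C').Walk x x)
    (hc : c.IsCycle) (ho : Odd c.length) (h : ∀ v ∈ c.support, v ∉ C) :
    ∀ v ∈ c.support, v ∈ Bad G C := by
  have he : ∀ e ∈ c.edges, e ∈ (del G C).edgeSet := by
    intro e
    induction e using Sym2.ind with
    | _ a b =>
      intro he
      exact ⟨(c.adj_of_mem_edges he).1, h _ (c.fst_mem_support_of_mem_edges he),
        h _ (c.snd_mem_support_of_mem_edges he)⟩
  intro v hv
  exact ⟨x, c.transfer _ he, hc.transfer he, by simpa using ho, by simpa using hv⟩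

theorem not_bad (G : SimpleGraph V) (C : Set V) {v : V} (hv : v ∈ C) : v ∉ Bad G C := by
  rintro ⟨x, c, hc, -, h⟩
  obtain ⟨y, z, -, h1, -⟩ := cycle_nbrs _ c hc h
  exact h1.2.1 hv

theorem even_of_invol (S : Finset V) (g : V → V) (h1 : ∀ a ∈ S, g a ∈ S) (h2 : ∀ a ∈ S, g a ≠ a)
    (h3 : ∀ a ∈ S, g (g a) = a) : Even S.card := by
  have := Finset.sum_involution (s := S) (f := fun _ => (1 : ZMod 2)) (fun a _ => g a)
    (fun a _ => by decide) (fun a ha _ => h2 a ha) (fun a ha => h1 a ha) (fun a ha => h3 a ha)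
  simp only [Finset.sum_const, nsmul_eq_mul, mul_one] at this
  exact (ZMod.natCast_eq_zero_iff_even).mp this

theorem improve (G : SimpleGraph V) (hG : Hyp G) (C : Set V) (hC : Good G C)
    (h : ¬ (del G C).Colorable 2) : ∃ C', Good G C' ∧ Bad G C' ⊂ Bad G C := by
  classical
  obtain ⟨x0, c, hc, ho⟩ := odd_cycle _ h
  set S : Set V := {v | v ∈ c.support} with hS
  have hx0 : x0 ∈ S := c.start_mem_support
  have nb : ∀ v ∈ S, ∃ y z, y ≠ z ∧ (del G C).Adj v y ∧ (del G C).Adj v z ∧ y ∈ S ∧ z ∈ S := by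
    intro v hv
    obtain ⟨y, z, h1, h2, h3, h4, h5, -⟩ := cycle_nbrs _ c hc hv
    exact ⟨y, z, h1, h2, h3, h4, h5⟩
  have hSC : ∀ v ∈ S, v ∉ C := by
    intro v hv
    obtain ⟨y, z, h1, h2, -⟩ := nb v hv
    exact h2.2.1
  have hSB : ∀ v ∈ S, v ∈ Bad G C := fun v hv => ⟨x0, c, hc, ho, hv⟩
  have clo : ∀ v ∈ S, ∀ w, G.Adj v w → w ∉ C → w ∈ S := by
    intro v hv w hw hwC
    obtain ⟨y, z, h1, ⟨h2, _, h2C⟩, ⟨h3, _, h3C⟩, h4, h5⟩ := nb v hv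
    by_contra hwS
    have n1 : y ≠ w := by rintro rfl; exact hwS h4
    have n2 : z ≠ w := by rintro rfl; exact hwS h5
    obtain ⟨a, b, ha, hb, hab⟩ := hG.tri v ⟨y, z, w, h1, n1, n2, h2, h3, hw⟩
    rcases hC.hit v a b ha hb hab with h6 | h6 | h6
    · exact hSC v hv h6
    · rcases hG.sub v y z w a h2 h3 hw ha h1 n1 n2 with rfl | rfl | rfl <;> contradiction
    · rcases hG.sub v y z w b h2 h3 hw hb h1 n1 n2 with rfl | rfl | rfl <;> contradiction
  have conn : ∀ v ∈ S, (del G C).Reachable x0 v := fun v hv => ⟨c.takeUntil v hv⟩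
  have d3 : ∀ v ∈ S, ∀ a ∈ C, G.Adj v a → D3 G v := by
    intro v hv a ha hva
    obtain ⟨y, z, h1, ⟨h2, _, h2C⟩, ⟨h3, _, h3C⟩, h4, h5⟩ := nb v hv
    exact ⟨a, y, z, by rintro rfl; exact h2C ha, by rintro rfl; exact h3C ha, h1, hva, h2, h3⟩
  have uniq : ∀ v ∈ S, ∀ a ∈ C, G.Adj v a → ∀ b ∈ C, G.Adj v b → a = b := by
    intro v hv a ha hva b hb hvb
    by_contra hab
    exact hC.ncom a ha b hb hab v hva.symm hvb.symm
  have part : ∀ v ∈ S, ∀ a ∈ C, G.Adj v a → ∃ d ∈ S, G.Adj v d ∧ G.Adj d a := by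
    intro v hv a ha hva
    obtain ⟨p, q, hp, hq, hpq⟩ := hG.tri v (d3 v hv a ha hva)
    rcases hC.hit v p q hp hq hpq with h6 | h6 | h6
    · exact absurd h6 (hSC v hv)
    · obtain rfl := uniq v hv a ha hva p h6 hp
      exact ⟨q, clo v hv q hq (fun hqC => hC.nadj _ ha _ hqC hpq), hq, hpq.symm⟩
    · obtain rfl := uniq v hv a ha hva q h6 hq
      exact ⟨p, clo v hv p hp (fun hqC => hC.nadj _ hqC _ ha hpq), hp, hpq⟩
  by_cases hT0 : ∃ v ∈ S, ∃ a ∈ C, G.Adj v a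
  swap
  · push Not at hT0
    refine ⟨insert x0 C, ⟨?_, ?_, ?_⟩, ?_⟩
    · rintro x (rfl | hx) y (rfl | hy) hxy
      · exact G.loopless.irrefl _ hxy
      · exact hT0 _ hx0 _ hy hxy
      · exact hT0 _ hx0 _ hx hxy.symm
      · exact hC.nadj _ hx _ hy hxy
    · have key : ∀ y ∈ C, ∀ z, G.Adj x0 z → G.Adj y z → False := by
        intro y hy z hz hyz
        by_cases hzC : z ∈ C
        · exact hC.nadj _ hy _ hzC hyz
        · exact hT0 z (clo _ hx0 _ hz hzC) y hy hyz.symm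
      rintro x (rfl | hx) y (rfl | hy) hxy z h1 h2
      · exact hxy rfl
      · exact key y hy z h1 h2
      · exact key x hx z h2 h1
      · exact hC.ncom x hx y hy hxy z h1 h2
    · intro x y z h1 h2 h3
      rcases hC.hit x y z h1 h2 h3 with h | h | h <;> simp [h]
    · rw [Set.ssubset_iff_of_subset]
      · exact ⟨x0, hSB _ hx0, not_bad _ _ (Set.mem_insert _ _)⟩
      · rintro v ⟨x, c', hc', ho', hv⟩
        refine bad_of G C _ c' hc' ho' ?_ v hv
        intro w hw hwC
        obtain ⟨y, z, -, h1, -⟩ := cycle_nbrs _ c' hc' hw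
        exact h1.2.1 (Set.mem_insert_of_mem _ hwC)
  by_cases hall : ∀ v ∈ S, ∃ a ∈ C, G.Adj v a
  · -- parity
    exfalso
    choose! g hgC hg using hall
    have : ∀ v ∈ S, ∃ d ∈ S, G.Adj v d ∧ G.Adj d (g v) :=
      fun v hv => part v hv (g v) (hgC v hv) (hg v hv)
    choose! f hfS hf1 hf2 using this
    have hev : Even c.support.tail.toFinset.card := by
      have hm : ∀ v, v ∈ c.support.tail.toFinset ↔ v ∈ S := by
        intro v
        rw [List.mem_toFinset, hS, Set.mem_setOf_eq, SimpleGraph.Walk.mem_support_iff]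
        constructor
        · exact Or.inr
        · rintro (rfl | h)
          · exact c.end_mem_tail_support hc.not_nil
          · exact h
      refine even_of_invol _ f ?_ ?_ ?_
      · intro a ha; rw [hm] at *; exact hfS a ha
      · intro a ha; rw [hm] at *; exact (hf1 a ha).ne'
      · intro b hb
        rw [hm] at hb
        have hs := hfS b hb
        have e : g (f b) = g b := uniq _ hs _ (hgC _ hs) (hg _ hs) _ (hgC _ hb) (hf2 _ hb)
        by_contra hne
        have hss := hfS _ hs
        have h1 := hf1 _ hs
        have h2 := hf2 _ hs
        rw [e] at h2
        have ga := hgC b hb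
        refine hG.sat (f b) (g b) b (f (f b)) (hf2 b hb) (hf1 b hb).symm h1
          (fun h => hSC _ hb (h ▸ ga)) (fun h => hSC _ hss (h ▸ ga)) (fun h => hne h.symm)
          ⟨b, f b, f (f b), (hf1 b hb).ne, fun h => hne h.symm, h1.ne,
            (hg b hb).symm, (hf2 b hb).symm, h2.symm⟩
          (d3 b hb _ ga (hg b hb)) (d3 _ hss _ ga h2)
    rw [List.toFinset_card_of_nodup hc.support_nodup] at hev
    simp at hev
    exact (Nat.not_even_iff_odd.mpr ho) hev
  -- swap
  obtain ⟨b, hb, b', hbb', ⟨a, haC, hba⟩, hb'⟩ : ∃ b ∈ S, ∃ b', (del G C).Adj b b' ∧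
      (∃ a ∈ C, G.Adj b a) ∧ ¬ ∃ a ∈ C, G.Adj b' a := by
    by_contra hno
    push Not at hno
    obtain ⟨v, hv, a, ha, hva⟩ := hT0
    apply hall
    intro u hu
    have hr : (del G C).Reachable v u := (conn v hv).symm.trans (conn u hu)
    have := reach_closed _ {w | w ∈ S ∧ ∃ a ∈ C, G.Adj w a} (by
      rintro p ⟨hp, hp'⟩ q hpq
      exact ⟨clo p hp q hpq.1 hpq.2.2, hno p hp q hpq hp'⟩) hr ⟨hv, a, ha, hva⟩
    exact this.2
  obtain ⟨d, hd, hbd, hda⟩ := part b hb a haC hba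
  have hbC := hSC b hb
  have hdC := hSC d hd
  have hb'd : b' ≠ d := by rintro rfl; exact hb' ⟨a, haC, hda⟩
  have hb'a : b' ≠ a := by rintro rfl; exact hbb'.2.2 haC
  have hda' : d ≠ a := hda.ne
  have Nb : ∀ w, G.Adj b w → w = a ∨ w = d ∨ w = b' := fun w hw =>
    hG.sub b a d b' w hba hbd hbb'.1 hw hda'.symm hb'a.symm hb'd.symm
  have Db := d3 b hb a haC hba
  have Dd := d3 d hd a haC hda
  have n1 : ∀ x ∈ C, x ≠ a → ¬ G.Adj b x := by
    intro x hx hxa hbx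
    exact hxa (uniq b hb x hx hbx a haC hba)
  have n2 : ∀ x ∈ C, x ≠ a → ∀ z, G.Adj b z → G.Adj x z → False := by
    intro x hx hxa z hz hxz
    rcases Nb z hz with rfl | rfl | rfl
    · exact hC.nadj _ hx _ haC hxz
    · exact hC.ncom _ hx _ haC hxa _ hxz hda.symm
    · exact hb' ⟨x, hx, hxz.symm⟩
  refine ⟨insert b (C \ {a}), ⟨?_, ?_, ?_⟩, ?_⟩
  · rintro x (rfl | ⟨hx, hxa⟩) y (rfl | ⟨hy, hya⟩) hxy
    · exact G.loopless.irrefl _ hxy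
    · exact n1 _ hy hya hxy
    · exact n1 _ hx hxa hxy.symm
    · exact hC.nadj _ hx _ hy hxy
  · rintro x (rfl | ⟨hx, hxa⟩) y (rfl | ⟨hy, hya⟩) hxy z h1 h2
    · exact hxy rfl
    · exact n2 y hy hya z h1 h2
    · exact n2 x hx hxa z h2 h1
    · exact hC.ncom x hx y hy hxy z h1 h2
  · -- triangles hit
    have ex : ∀ y, G.Adj a y → G.Adj d y → y = b := by
      intro y hy hdy
      by_contra hyb
      have hyS := clo d hd y hdy (fun hyC => hC.nadj _ haC _ hyC hy)
      exact hG.sat d a b y hda hbd.symm hdy hba.ne' hy.ne (Ne.symm hyb)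
        ⟨b, d, y, hbd.ne, Ne.symm hyb, hdy.ne, hba.symm, hda.symm, hy⟩ Db
        (d3 y hyS a haC hy.symm)
    have key : ∀ y z, G.Adj a y → G.Adj a z → G.Adj y z → y = b ∨ z = b := by
      intro y z hy hz hyz
      by_contra hno
      push Not at hno
      have hyd : y ≠ d := by rintro rfl; exact hno.2 (ex z hz hyz)
      have hzd : z ≠ d := by rintro rfl; exact hno.1 (ex y hy hyz.symm)
      rcases hG.sub a b d y z hba.symm hda.symm hy hz hbd.ne hno.1.symm hyd.symm with h | h | h
      · exact hno.2 h
      · exact hzd h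
      · exact hyz.ne h.symm
    intro x y z h1 h2 h3
    by_cases hxa : x = a
    · subst hxa
      rcases key y z h1 h2 h3 with rfl | rfl <;> simp
    by_cases hya : y = a
    · subst hya
      rcases key x z h1.symm h3 h2 with rfl | rfl <;> simp
    by_cases hza : z = a
    · subst hza
      rcases key x y h2.symm h3.symm h1 with rfl | rfl <;> simp
    rcases hC.hit x y z h1 h2 h3 with h | h | h
    · exact Or.inl (Or.inr ⟨h, hxa⟩)
    · exact Or.inr (Or.inl (Or.inr ⟨h, hya⟩))
    · exact Or.inr (Or.inr (Or.inr ⟨h, hza⟩))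
  · rw [Set.ssubset_iff_of_subset]
    · exact ⟨b, hSB _ hb, not_bad _ _ (Set.mem_insert _ _)⟩
    · rintro v ⟨x, c', hc', ho', hv⟩
      refine bad_of G C _ c' hc' ho' ?_ v hv
      intro w hw hwC
      obtain ⟨y, z, hyz, h1, h2, -, -, e1, e2⟩ := cycle_nbrs _ c' hc' hw
      have hwa : w = a := by
        by_contra hwa
        exact h1.2.1 (Or.inr ⟨hwC, hwa⟩)
      subst hwa
      have hyb : y ≠ b := by rintro rfl; exact h1.2.2 (Or.inl rfl)
      have hzb : z ≠ b := by rintro rfl; exact h2.2.2 (Or.inl rfl)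
      have he : s(d, w) ∈ c'.edges := by
        rw [Sym2.eq_swap]
        by_cases hyd : y = d
        · rw [← hyd]; exact e1
        · rcases hG.sub w b d y z hba.symm hda.symm h1.1 h2.1 hbd.ne hyb.symm (Ne.symm hyd)
            with h | h | h
          · exact absurd h hzb
          · rw [← h]; exact e2
          · exact absurd h.symm hyz
      have hr := (SimpleGraph.adj_and_reachable_delete_edges_iff_exists_cycle.mpr
        ⟨x, c', hc', he⟩).2
      refine hSC w ?_ haC
      refine reach_closed _ S ?_ hr hd
      intro p hp q hpq
      rw [SimpleGraph.deleteEdges_adj] at hpq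
      obtain ⟨⟨hpq, hpC, hqC⟩, hne⟩ := hpq
      by_cases hqw : q = w
      · exfalso
        subst hqw
        have hpd : p ≠ d := by rintro rfl; exact hne rfl
        have hpb : p ≠ b := by rintro rfl; exact hpC (Or.inl rfl)
        exact hG.sat q b d p hba.symm hda.symm hpq.symm hbd.ne hpb.symm hpd.symm Db Dd
          (d3 p hp q haC hpq)
      · exact clo p hp q hpq (fun hq => hqC (Or.inr ⟨hq, hqw⟩))

theorem conclude [Finite V] (G : SimpleGraph V) (hG : Hyp G) (h : ∃ C, Good G C) :
    ∃ c : V → Fin 3, IsPackingColoring G ![1, 1, 2] c := by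
  obtain ⟨C, hC, hmin⟩ := (Set.toFinite {C | Good G C}).exists_minimalFor (Bad G) _ h
  by_cases hcol : (del G C).Colorable 2
  · exact finish G C hC hcol
  · obtain ⟨C', h1, h2⟩ := improve G hG C hC hcol
    exact absurd (hmin h1 h2.1) h2.2
end P112
namespace P112
variable {V : Type*}

def X1 (G : SimpleGraph V) (x : V) : Prop :=
  ∃ y u v, u ≠ v ∧ G.Adj x y ∧ G.Adj x u ∧ G.Adj x v ∧ G.Adj y u ∧ G.Adj y v

def X2 (G : SimpleGraph V) (x : V) : Prop :=
  ∃ b c, G.Adj x b ∧ G.Adj x c ∧ G.Adj b c ∧ (∀ z, G.Adj x z → z = b ∨ z = c) ∧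
    ∀ z, G.Adj b z → G.Adj c z → z = x

theorem X_common (G : SimpleGraph V) (hG : Hyp G) {x y : V} (hx : X1 G x ∨ X2 G x)
    (h : G.Adj x y) : ∃ w, G.Adj x w ∧ G.Adj y w := by
  rcases hx with ⟨a, u, v, h1, h2, h3, h4, h5, h6⟩ | ⟨b, c, h1, h2, h3, h4, -⟩
  · rcases hG.sub x a u v y h2 h3 h4 h h5.ne h6.ne h1 with rfl | rfl | rfl
    · exact ⟨u, h3, h5⟩
    · exact ⟨a, h2, h5.symm⟩
    · exact ⟨a, h2, h6.symm⟩
  · rcases h4 y h with rfl | rfl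
    · exact ⟨c, h2, h3⟩
    · exact ⟨b, h1, h3.symm⟩

structure Base (G : SimpleGraph V) (C : Set V) : Prop where
  nadj : ∀ x ∈ C, ∀ y ∈ C, ¬ G.Adj x y
  ncom : ∀ x ∈ C, ∀ y ∈ C, x ≠ y → ∀ z, G.Adj x z → G.Adj y z → False
  inX : ∀ x ∈ C, X1 G x ∨ X2 G x

theorem exists_base [Finite V] (G : SimpleGraph V) : ∃ C, Base G C ∧
    ∀ x, (X1 G x ∨ X2 G x) → x ∉ C → ∃ y ∈ C, G.Adj x y ∨ ∃ z, G.Adj x z ∧ G.Adj y z := by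
  obtain ⟨C, hC, hmax⟩ := (Set.toFinite {C | Base G C}).exists_maximal
    ⟨∅, ⟨by simp, by simp, by simp⟩⟩
  have hC : Base G C := hC
  refine ⟨C, hC, ?_⟩
  intro x hx hxC
  by_contra hno
  push Not at hno
  have : Base G (insert x C) := by
    refine ⟨?_, ?_, ?_⟩
    · rintro a (rfl | ha) b (rfl | hb) hab
      · exact G.loopless.irrefl _ hab
      · exact (hno b hb).1 hab
      · exact (hno a ha).1 hab.symm
      · exact hC.nadj a ha b hb hab
    · rintro a (rfl | ha) b (rfl | hb) hab z h1 h2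
      · exact hab rfl
      · exact (hno b hb).2 z h1 h2
      · exact (hno a ha).2 z h2 h1
      · exact hC.ncom a ha b hb hab z h1 h2
    · rintro a (rfl | ha)
      · exact hx
      · exact hC.inX a ha
  exact hxC (hmax this (Set.subset_insert _ _) (Set.mem_insert _ _))

structure UT (G : SimpleGraph V) (C : Set V) (p q r : V) : Prop where
  pq : G.Adj p q
  pr : G.Adj p r
  qr : G.Adj q r
  hp : p ∉ C
  hq : q ∉ C
  hr : r ∉ C

theorem UT.rot {G : SimpleGraph V} {C : Set V} {p q r : V} (h : UT G C p q r) : UT G C q r p :=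
  ⟨h.qr, h.pq.symm, h.pr.symm, h.hq, h.hr, h.hp⟩

theorem UT.no_other {G : SimpleGraph V} (hG : Hyp G) {C : Set V} (hC : Base G C)
    (hmax : ∀ x, (X1 G x ∨ X2 G x) → x ∉ C → ∃ y ∈ C, G.Adj x y ∨ ∃ z, G.Adj x z ∧ G.Adj y z)
    {p q r : V} (h : UT G C p q r) {s : V} (h1 : G.Adj p s) (h2 : G.Adj q s) : s = r := by
  obtain ⟨pq, pr, qr, hp, hq, hr⟩ := h
  by_contra hsr
  have Np : ∀ w, G.Adj p w → w = q ∨ w = r ∨ w = s := fun w hw =>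
    hG.sub p q r s w pq pr h1 hw qr.ne h2.ne (Ne.symm hsr)
  have Nq : ∀ w, G.Adj q w → w = p ∨ w = r ∨ w = s := fun w hw =>
    hG.sub q p r s w pq.symm qr h2 hw pr.ne h1.ne (Ne.symm hsr)
  have rs : ¬ G.Adj r s := fun rs =>
    hG.sat p q r s pq pr h1 qr.ne h2.ne (Ne.symm hsr)
      ⟨p, r, s, pr.ne, h1.ne, Ne.symm hsr, pq.symm, qr, h2⟩
      ⟨p, q, s, pq.ne, h1.ne, h2.ne, pr.symm, qr.symm, rs⟩
      ⟨p, q, r, pq.ne, pr.ne, qr.ne, h1.symm, h2.symm, rs.symm⟩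
  have hs : ¬ (X1 G s ∨ X2 G s) := by
    rintro (⟨y, u, v, uv, sy, su, sv, yu, yv⟩ | ⟨b, c, sb, sc, bc, h4, h5⟩)
    · have Ns : ∀ w, G.Adj s w → w = y ∨ w = u ∨ w = v := fun w hw =>
        hG.sub s y u v w sy su sv hw yu.ne yv.ne uv
      have key : ∀ t, G.Adj s t → t ≠ p → t ≠ q → (G.Adj p t ∨ G.Adj q t) → False := by
        intro t st tp tq htt
        have : t = r := by
          rcases htt with h | h
          · rcases Np t h with h | h | h
            · exact absurd h tq
            · exact h
            · exact absurd h st.ne'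
          · rcases Nq t h with h | h | h
            · exact absurd h tp
            · exact h
            · exact absurd h st.ne'
        subst this
        exact rs st.symm
      have e1 := Ns p h1.symm
      have e2 := Ns q h2.symm
      have := pq.ne
      have k1 := key y sy
      have k2 := key u su
      have k3 := key v sv
      have := yu.symm
      have := yv.symm
      have := yu.ne
      have := yv.ne
      rcases e1 with rfl | rfl | rfl <;> rcases e2 with rfl | rfl | rfl <;> grind
    · have e : s ≠ r := hsr
      rcases h4 p h1.symm with rfl | rfl <;> rcases h4 q h2.symm with rfl | rfl
      · exact pq.ne rfl
      · exact e (h5 r pr qr).symm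
      · exact e (h5 r qr pr).symm
      · exact pq.ne rfl
  have nr : ∀ y ∈ C, ¬ G.Adj y r := by
    intro y hy yr
    have yp : y ≠ p := by rintro rfl; exact hp hy
    have yq : y ≠ q := by rintro rfl; exact hq hy
    have yr' : y ≠ r := yr.ne
    have ys : y ≠ s := by rintro rfl; exact hs (hC.inX _ hy)
    obtain ⟨w, hw1, hw2⟩ := X_common G hG (hC.inX y hy) yr
    rcases hG.sub r p q y w pr.symm qr.symm yr.symm hw2 pq.ne yp.symm yq.symm with rfl | rfl | rfl
    · rcases Np y hw1.symm with h | h | h <;> contradiction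
    · rcases Nq y hw1.symm with h | h | h <;> contradiction
    · exact hw1.ne rfl
  have ns : ∀ y ∈ C, ¬ G.Adj y s := by
    intro y hy yr
    have yp : y ≠ p := by rintro rfl; exact hp hy
    have yq : y ≠ q := by rintro rfl; exact hq hy
    have yr' : y ≠ r := by rintro rfl; exact hr hy
    have ys : y ≠ s := by rintro rfl; exact hs (hC.inX _ hy)
    obtain ⟨w, hw1, hw2⟩ := X_common G hG (hC.inX y hy) yr
    rcases hG.sub s p q y w h1.symm h2.symm yr.symm hw2 pq.ne yp.symm yq.symm with rfl | rfl | rfl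
    · rcases Np y hw1.symm with h | h | h <;> contradiction
    · rcases Nq y hw1.symm with h | h | h <;> contradiction
    · exact hw1.ne rfl
  obtain ⟨y, hy, hc⟩ := hmax p (Or.inl ⟨q, r, s, Ne.symm hsr, pq, pr, h1, qr, h2⟩) hp
  have yp : y ≠ p := by rintro rfl; exact hp hy
  have yq : y ≠ q := by rintro rfl; exact hq hy
  have yr' : y ≠ r := by rintro rfl; exact hr hy
  have ys : y ≠ s := by rintro rfl; exact hs (hC.inX _ hy)
  rcases hc with hc | ⟨z, hz, hyz⟩
  · rcases Np y hc with h | h | h <;> contradiction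
  · rcases Np z hz with rfl | rfl | rfl
    · rcases Nq y hyz.symm with h | h | h <;> contradiction
    · exact nr y hy hyz
    · exact ns y hy hyz

theorem UT.d3 {G : SimpleGraph V} (hG : Hyp G) {C : Set V} (hC : Base G C)
    (hmax : ∀ x, (X1 G x ∨ X2 G x) → x ∉ C → ∃ y ∈ C, G.Adj x y ∨ ∃ z, G.Adj x z ∧ G.Adj y z)
    {p q r : V} (h : UT G C p q r) : ∃ m, G.Adj p m ∧ m ≠ q ∧ m ≠ r := by
  by_contra hno
  have hno : ∀ m, G.Adj p m → m = q ∨ m = r := by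
    intro m hm
    by_contra h'
    push Not at h'
    exact hno ⟨m, hm, h'⟩
  obtain ⟨y, hy, hc⟩ := hmax p (Or.inr ⟨q, r, h.pq, h.pr, h.qr, hno,
    fun z h1 h2 => h.rot.no_other hG hC hmax h1 h2⟩) h.hp
  have yp : y ≠ p := by rintro rfl; exact h.hp hy
  have yq : y ≠ q := by rintro rfl; exact h.hq hy
  have yr : y ≠ r := by rintro rfl; exact h.hr hy
  rcases hc with hc | ⟨z, hz, hyz⟩
  · rcases hno y hc with h | h <;> contradiction
  · obtain ⟨w, hw1, hw2⟩ := X_common G hG (hC.inX y hy) hyz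
    rcases hno z hz with rfl | rfl
    · rcases hG.sub z p r y w h.pq.symm h.qr hyz.symm hw2 h.pr.ne yp.symm yr.symm
        with rfl | rfl | rfl
      · exact yr (h.no_other hG hC hmax hw1.symm hyz.symm)
      · exact yp (h.rot.no_other hG hC hmax hyz.symm hw1.symm)
      · exact hw1.ne rfl
    · rcases hG.sub z p q y w h.pr.symm h.qr.symm hyz.symm hw2 h.pq.ne yp.symm yq.symm
        with rfl | rfl | rfl
      · exact yq (h.rot.rot.no_other hG hC hmax hyz.symm hw1.symm)
      · exact yp (h.rot.no_other hG hC hmax hw1.symm hyz.symm)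
      · exact hw1.ne rfl

theorem exists_good [Finite V] (G : SimpleGraph V) (hG : Hyp G) : ∃ C, Good G C := by
  classical
  have := Fintype.ofFinite V
  obtain ⟨C, hC, hmax⟩ := exists_base G
  let U : Finset V → Prop := fun T => ∃ p q r, T = {p, q, r} ∧ UT G C p q r
  have pt : ∀ T, U T → ∀ v ∈ T, ∃ q r, T = {v, q, r} ∧ UT G C v q r := by
    rintro T ⟨p, q, r, rfl, h⟩ v hv
    simp only [Finset.mem_insert, Finset.mem_singleton] at hv
    rcases hv with rfl | rfl | rfl
    · exact ⟨q, r, rfl, h⟩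
    · exact ⟨r, p, by ext; simp; tauto, h.rot⟩
    · exact ⟨p, q, by ext; simp; tauto, h.rot.rot⟩
  have hcard : ∀ T, U T → T.card = 3 := by
    rintro T ⟨p, q, r, rfl, h⟩
    exact Finset.card_eq_three.mpr ⟨p, q, r, h.pq.ne, h.pr.ne, h.qr.ne, rfl⟩
  have fb : ∀ T, U T → ∀ v ∈ T, D3 G v := by
    intro T hT v hv
    obtain ⟨q, r, rfl, h⟩ := pt T hT v hv
    obtain ⟨m, h1, h2, h3⟩ := h.d3 hG hC hmax
    exact ⟨m, q, r, h2, h3, h.qr.ne, h1, h.pq, h.pr⟩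
  have fC : ∀ T, U T → ∀ v ∈ T, v ∉ C := by
    intro T hT v hv
    obtain ⟨q, r, rfl, h⟩ := pt T hT v hv
    exact h.hp
  have fc : ∀ T, U T → ∀ v ∈ T, ∀ w ∈ T, v ≠ w → ∀ s, G.Adj v s → G.Adj w s → s ∈ T := by
    intro T hT v hv w hw hvw s h1 h2
    obtain ⟨q, r, rfl, h⟩ := pt T hT v hv
    simp only [Finset.mem_insert, Finset.mem_singleton] at hw ⊢
    rcases hw with rfl | rfl | rfl
    · exact absurd rfl hvw
    · exact Or.inr (Or.inr (h.no_other hG hC hmax h1 h2))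
    · exact Or.inr (Or.inl (h.rot.rot.no_other hG hC hmax h2 h1))
  have fd : ∀ T, U T → ∀ v ∈ T, ∃ m, m ∉ T ∧ G.Adj v m := by
    intro T hT v hv
    obtain ⟨q, r, rfl, h⟩ := pt T hT v hv
    obtain ⟨m, h1, h2, h3⟩ := h.d3 hG hC hmax
    exact ⟨m, by simp [h2, h3, h1.ne'], h1⟩
  have fu : ∀ T, U T → ∀ v ∈ T, ∀ m m', m ∉ T → m' ∉ T → G.Adj v m → G.Adj v m' → m = m' := by
    intro T hT v hv m m' hm hm' h1 h2
    obtain ⟨q, r, rfl, h⟩ := pt T hT v hv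
    simp only [Finset.mem_insert, Finset.mem_singleton, not_or] at hm hm'
    rcases hG.sub v q r m m' h.pq h.pr h1 h2 h.qr.ne (Ne.symm hm.2.1) (Ne.symm hm.2.2)
      with h | h | h
    · exact absurd h hm'.2.1
    · exact absurd h hm'.2.2
    · exact h.symm
  have fe : ∀ T, U T → ∀ v ∈ T, ∀ m, m ∉ T → G.Adj v m → ¬ D3 G m := by
    intro T hT v hv m hm h1 h2
    have hb := fb T hT
    obtain ⟨q, r, rfl, h⟩ := pt T hT v hv
    simp only [Finset.mem_insert, Finset.mem_singleton, not_or] at hm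
    exact hG.sat v q r m h.pq h.pr h1 h.qr.ne (Ne.symm hm.2.1) (Ne.symm hm.2.2)
      (hb q (by simp)) (hb r (by simp)) h2
  have ff : ∀ T, U T → ∀ T', U T' → ∀ v, v ∈ T → v ∈ T' → T = T' := by
    intro T hT T' hT' v hv hv'
    have hc := hcard T hT
    have hc' := hcard T' hT'
    refine (Finset.eq_of_subset_of_card_le ?_ (by omega)).symm
    obtain ⟨x, y, rfl, h⟩ := pt T' hT' v hv'
    have : x ∈ T ∧ y ∈ T := by
      by_cases hx : x ∈ T
      · exact ⟨hx, fc T hT v hv x hx h.pq.ne y h.pr h.qr⟩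
      · by_cases hy : y ∈ T
        · exact ⟨fc T hT v hv y hy h.pr.ne x h.pq h.qr.symm, hy⟩
        · exact absurd (fu T hT v hv x y hx hy h.pq h.pr) h.qr.ne
    intro w hw
    simp only [Finset.mem_insert, Finset.mem_singleton] at hw
    rcases hw with rfl | rfl | rfl
    · exact hv
    · exact this.1
    · exact this.2
  -- Hall
  let t : {T : Finset V // U T} → Finset V := fun T =>
    Finset.univ.filter (fun m => m ∉ T.1 ∧ ∃ v ∈ T.1, G.Adj v m)
  have ht : ∀ T m, m ∈ t T ↔ m ∉ T.1 ∧ ∃ v ∈ T.1, G.Adj v m := by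
    intro T m; simp [t]
  have hall : ∀ S : Finset {T : Finset V // U T}, S.card ≤ (S.biUnion t).card := by
    intro S
    have := Finset.card_mul_le_card_mul (s := S) (t := S.biUnion t) (m := 3) (n := 2)
      (fun T m => m ∈ t T) ?_ ?_
    · omega
    · intro T hT
      have h0 := fd T.1 T.2
      choose! f hf1 hf2 using h0
      rw [← hcard T.1 T.2]
      refine Finset.card_le_card_of_injOn f ?_ ?_
      · intro v hv
        have hm : f v ∈ t T := (ht _ _).mpr ⟨hf1 v hv, v, hv, hf2 v hv⟩
        simp only [Finset.coe_bipartiteAbove, Set.mem_setOf_eq]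
        exact ⟨Finset.mem_biUnion.mpr ⟨T, hT, hm⟩, hm⟩
      · intro v hv w hw hvw
        by_contra hne
        exact hf1 v hv (fc T.1 T.2 v hv w hw hne _ (hf2 v hv) (hvw ▸ hf2 w hw))
    · intro m hm
      by_contra hlt
      push Not at hlt
      obtain ⟨T1, h1, T2, h2, T3, h3, n12, n13, n23⟩ := Finset.two_lt_card.mp hlt
      simp only [Finset.mem_bipartiteBelow] at h1 h2 h3
      obtain ⟨hm1, v1, hv1, a1⟩ := (ht _ _).mp h1.2
      obtain ⟨hm2, v2, hv2, a2⟩ := (ht _ _).mp h2.2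
      obtain ⟨hm3, v3, hv3, a3⟩ := (ht _ _).mp h3.2
      refine fe T1.1 T1.2 v1 hv1 m hm1 a1 ⟨v1, v2, v3, ?_, ?_, ?_, a1.symm, a2.symm, a3.symm⟩
      · rintro rfl; exact n12 (Subtype.ext (ff _ T1.2 _ T2.2 _ hv1 hv2))
      · rintro rfl; exact n13 (Subtype.ext (ff _ T1.2 _ T3.2 _ hv1 hv3))
      · rintro rfl; exact n23 (Subtype.ext (ff _ T2.2 _ T3.2 _ hv2 hv3))
  obtain ⟨f, hinj, hf⟩ := (Finset.all_card_le_biUnion_card_iff_exists_injective t).mp hall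
  have hf' : ∀ T, f T ∉ T.1 ∧ ∃ v ∈ T.1, G.Adj v (f T) := fun T => (ht _ _).mp (hf T)
  choose hfT g hgT hgf using hf'
  -- C versus unhit triangles
  have k1 : ∀ x ∈ C, ∀ T, U T → ∀ v ∈ T, ¬ G.Adj x v := by
    intro x hx T hT v hv hxv
    obtain ⟨w, hw1, hw2⟩ := X_common G hG (hC.inX x hx) hxv
    have hxT : x ∉ T := fun h => fC T hT x h hx
    by_cases hwT : w ∈ T
    · exact hxT (fc T hT v hv w hwT hw2.ne x hxv.symm hw1.symm)
    · exact hw1.ne (fu T hT v hv x w hxT hwT hxv.symm hw2)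
  have k2 : ∀ x ∈ C, ∀ T, U T → ∀ v ∈ T, ∀ z, G.Adj x z → G.Adj v z → False := by
    intro x hx T hT v hv z hxz hvz
    by_cases hzT : z ∈ T
    · exact k1 x hx T hT z hzT hxz
    · obtain ⟨w, hw1, hw2⟩ := X_common G hG (hC.inX x hx) hxz
      have hxv : x ≠ v := by rintro rfl; exact fC T hT _ hv hx
      have hwv : w ≠ v := by rintro rfl; exact k1 x hx T hT w hv hw1
      exact fe T hT v hv z hzT hvz ⟨x, v, w, hxv, hw1.ne, hwv.symm, hxz.symm, hvz.symm, hw2⟩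
  have k3 : ∀ T, U T → ∀ T', U T' → T ≠ T' → ∀ v ∈ T, ∀ w ∈ T', ¬ G.Adj v w := by
    intro T hT T' hT' hne v hv w hw hvw
    have hwT : w ∉ T := fun h => hne (ff T hT T' hT' w h hw)
    exact fe T hT v hv w hwT hvw (fb T' hT' w hw)
  refine ⟨C ∪ Set.range g, ?_, ?_, ?_⟩
  · rintro x (hx | ⟨T, rfl⟩) y (hy | ⟨T', rfl⟩) hxy
    · exact hC.nadj x hx y hy hxy
    · exact k1 x hx _ T'.2 _ (hgT T') hxy
    · exact k1 y hy _ T.2 _ (hgT T) hxy.symm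
    · by_cases he : T = T'
      · subst he; exact hxy.ne rfl
      · exact k3 _ T.2 _ T'.2 (fun h => he (Subtype.ext h)) _ (hgT T) _ (hgT T') hxy
  · rintro x (hx | ⟨T, rfl⟩) y (hy | ⟨T', rfl⟩) hxy z h1 h2
    · exact hC.ncom x hx y hy hxy z h1 h2
    · exact k2 x hx _ T'.2 _ (hgT T') z h1 h2
    · exact k2 y hy _ T.2 _ (hgT T) z h2 h1
    · have he : T ≠ T' := by rintro rfl; exact hxy rfl
      have he' : T.1 ≠ T'.1 := fun h => he (Subtype.ext h)
      have z1 : z ∉ T.1 := fun hz => k3 _ T.2 _ T'.2 he' z hz _ (hgT T') h2.symm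
      have z2 : z ∉ T'.1 := fun hz => k3 _ T.2 _ T'.2 he' _ (hgT T) z hz h1
      have e1 := fu _ T.2 _ (hgT T) z (f T) z1 (hfT T) h1 (hgf T)
      have e2 := fu _ T'.2 _ (hgT T') z (f T') z2 (hfT T') h2 (hgf T')
      exact he (hinj (e1.symm.trans e2))
  · intro x y z h1 h2 h3
    by_contra hno
    simp only [Set.mem_union, not_or] at hno
    let T : {T : Finset V // U T} :=
      ⟨{x, y, z}, x, y, z, rfl, ⟨h1, h2, h3, hno.1.1, hno.2.1.1, hno.2.2.1⟩⟩
    have hg := hgT T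
    have hr : g T ∈ Set.range g := ⟨T, rfl⟩
    have hg' : g T = x ∨ g T = y ∨ g T = z := by simpa [T] using hg
    rcases hg' with h | h | h <;> rw [h] at hr
    · exact hno.1.2 hr
    · exact hno.2.1.2 hr
    · exact hno.2.2.2 hr
end P112

/-- Every 2-saturated subcubic graph in which every 3-vertex lies on a triangle
admits a (1,1,2)-packing coloring. -/
theorem stmt_10 {V : Type*} [Fintype V] (G : SimpleGraph V) [DecidableRel G.Adj]
    (hsub : Subcubic G) (hsat : Saturated G 2)
    (hgirth : ∀ v : V, G.degree v = 3 → ∃ a b : V, G.Adj v a ∧ G.Adj v b ∧ G.Adj a b) :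
    ∃ c : V → Fin 3, IsPackingColoring G ![1, 1, 2] c := by
  have hG := P112.mkHyp G hsub hsat hgirth
  exact P112.conclude G hG (P112.exists_good G hG)
end

section
/- Every 2-saturated subcubic graph in which every 3-vertex lies on a triangle admits a (1,2,2,2)-packing coloring. -/
open SimpleGraph

theorem aux_mis {V : Type*} [Finite V] (G : SimpleGraph V) (S W : Set V)
    (hS : ∀ a ∈ S, ∀ b ∈ S, ¬ G.Adj a b) :
    ∃ I : Set V, S ⊆ I ∧ (∀ v ∈ I, v ∈ S ∨ v ∈ W) ∧ (∀ a ∈ I, ∀ b ∈ I, ¬ G.Adj a b) ∧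
      ∀ w ∈ W, w ∉ I → ∃ a ∈ I, G.Adj w a := by
  classical
  obtain ⟨I, hSI, hI⟩ := Set.Finite.exists_le_maximal
    (s := {I : Set V | (∀ v ∈ I, v ∈ S ∨ v ∈ W) ∧ (∀ a ∈ I, ∀ b ∈ I, ¬ G.Adj a b)})
    (Set.toFinite _) (a := S) ⟨fun v hv => Or.inl hv, hS⟩
  refine ⟨I, hSI, hI.prop.1, hI.prop.2, ?_⟩
  intro w hw hwI
  by_contra hno
  push Not at hno
  apply hwI
  have h1 : insert w I ∈ {I : Set V | (∀ v ∈ I, v ∈ S ∨ v ∈ W) ∧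
      (∀ a ∈ I, ∀ b ∈ I, ¬ G.Adj a b)} := by
    refine ⟨?_, ?_⟩
    · rintro v (rfl | hv)
      · exact Or.inr hw
      · exact hI.prop.1 v hv
    · rintro a (rfl | ha) b (rfl | hb)
      · exact G.loopless.irrefl _
      · exact hno b hb
      · exact fun h => hno a ha h.symm
      · exact hI.prop.2 a ha b hb
  exact hI.le_of_ge h1 (Set.subset_insert w I) (Set.mem_insert w I)

theorem aux_pick (a b : Fin 3) : ∃ x : Fin 3, x ≠ a ∧ x ≠ b := by
  revert a b; decide

theorem aux_greedy {V : Type*} (H : V → V → Prop) (hs : ∀ u v, H u v → H v u)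
    (hirr : ∀ u, ¬ H u u) (U : Finset V) (S : Set V) (c : V → Fin 3)
    (hc : ∀ u ∈ S, ∀ v ∈ S, H u v → c u ≠ c v)
    (hdeg : ∀ u ∈ U, ∃ a b, ∀ w, H u w → (w ∈ S ∨ w ∈ U) → w = a ∨ w = b) :
    ∃ c' : V → Fin 3, ∀ u, (u ∈ S ∨ u ∈ U) → ∀ v, (v ∈ S ∨ v ∈ U) → H u v → c' u ≠ c' v := by
  classical
  induction U using Finset.induction_on with
  | empty => exact ⟨c, by simpa using hc⟩
  | insert x U hx ih =>
    obtain ⟨c1, h1⟩ := ih (fun u hu => by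
      obtain ⟨a, b, h⟩ := hdeg u (Finset.mem_insert_of_mem hu)
      exact ⟨a, b, fun w hw hw2 => h w hw (hw2.imp id (Finset.mem_insert_of_mem))⟩)
    by_cases hxS : x ∈ S
    · refine ⟨c1, fun u hu v hv => h1 u ?_ v ?_⟩
      · grind
      · grind
    obtain ⟨a, b, hab⟩ := hdeg x (Finset.mem_insert_self _ _)
    obtain ⟨k, hka, hkb⟩ := aux_pick (c1 a) (c1 b)
    refine ⟨Function.update c1 x k, fun u hu v hv huv => ?_⟩
    by_cases hux : u = x
    · subst hux
      have hvu : v ≠ u := fun h => hirr u (h ▸ huv)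
      rw [Function.update_self, Function.update_of_ne hvu]
      rcases hab v huv hv with rfl | rfl
      · exact hka
      · exact hkb
    · by_cases hvx : v = x
      · subst hvx
        rw [Function.update_self, Function.update_of_ne hux]
        rcases hab u (hs _ _ huv) hu with rfl | rfl
        · exact hka.symm
        · exact hkb.symm
      · rw [Function.update_of_ne hvx, Function.update_of_ne hux]
        exact h1 u (by grind) v (by grind) huv

theorem aux_two {V : Type*} (n : ℕ) : ∀ (S : Finset V), S.card = n → ∀ (E1 E2 : V → V → Prop),
    (∀ u v, E1 u v → E1 v u) → (∀ u v, E2 u v → E2 v u) →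
    (∀ u, ¬ E1 u u) → (∀ u, ¬ E2 u u) →
    (∀ u v w, E1 u v → E1 u w → v = w) → (∀ u v w, E2 u v → E2 u w → v = w) →
    ∃ c : V → Bool, ∀ u ∈ S, ∀ v ∈ S, (E1 u v ∨ E2 u v) → c u ≠ c v := by
  classical
  induction n using Nat.strong_induction_on with
  | _ n ih =>
  intro S hS E1 E2 s1 s2 i1 i2 f1 f2
  rcases S.eq_empty_or_nonempty with rfl | ⟨a, ha⟩
  · exact ⟨fun _ => true, by simp⟩
  have hpos : (S.erase a).card < n := by
    rw [← hS]; exact Finset.card_erase_lt_of_mem ha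
  by_cases hb : ∃ b ∈ S, E1 a b
  · obtain ⟨b, hb, hab⟩ := hb
    have hab' : a ≠ b := fun h => i1 a (h ▸ hab)
    let E : V → V → Prop := fun u v => u ≠ v ∧ u ≠ a ∧ u ≠ b ∧ v ≠ a ∧ v ≠ b ∧
      (E2 u v ∨ (E2 a u ∧ E2 b v) ∨ (E2 b u ∧ E2 a v))
    have hE1 : ∀ u v, E u v → E v u := by
      intro u v h
      have := s2 u v
      grind
    have hE2 : ∀ u, ¬ E u u := fun u h => h.1 rfl
    have hE3 : ∀ u v w, E u v → E u w → v = w := by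
      intro u v w ⟨h1, h2, h3, h4, h5, h6⟩ ⟨g1, g2, g3, g4, g5, g6⟩
      rcases h6 with h | ⟨h, h'⟩ | ⟨h, h'⟩ <;> rcases g6 with g | ⟨g, g'⟩ | ⟨g, g'⟩
      · exact f2 _ _ _ h g
      · exact absurd (f2 _ _ _ h (s2 _ _ g)) h4
      · exact absurd (f2 _ _ _ h (s2 _ _ g)) h5
      · exact absurd (f2 _ _ _ g (s2 _ _ h)) g4
      · exact f2 _ _ _ h' g'
      · exact absurd (f2 _ _ _ (s2 _ _ h) (s2 _ _ g)) hab'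
      · exact absurd (f2 _ _ _ g (s2 _ _ h)) g5
      · exact absurd (f2 _ _ _ (s2 _ _ g) (s2 _ _ h)) hab'
      · exact f2 _ _ _ h' g'
    obtain ⟨c, hc⟩ := ih _ (lt_of_le_of_lt (Finset.card_le_card (Finset.erase_subset b _)) hpos)
      ((S.erase a).erase b) rfl E1 E s1 hE1 i1 hE2 f1 hE3
    -- colours for a and b
    have hx : ∃ x : Bool, ∀ d ∈ S, d ≠ b → (E2 a d → x ≠ c d) ∧ (E2 b d → (!x) ≠ c d) := by
      by_cases hda : ∃ d ∈ S, d ≠ b ∧ E2 a d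
      · obtain ⟨d, hd, hdb, had⟩ := hda
        refine ⟨! c d, fun e he heb => ⟨fun h => ?_, fun h => ?_⟩⟩
        · rw [f2 _ _ _ h had]; simp
        · have hda' : d ≠ a := fun h => i2 a (h ▸ had)
          have hea : e ≠ a := by
            rintro rfl
            exact hdb (f2 _ _ _ had (s2 _ _ h))
          have hde : d ≠ e := by
            rintro rfl
            exact hab' (f2 _ _ _ (s2 _ _ had) (s2 _ _ h))
          have := hc d (by simp [*]) e (by simp [*]) (Or.inr ⟨hde, hda', hdb, hea, heb, Or.inr (Or.inl ⟨had, h⟩)⟩)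
          simpa using this
      · by_cases hdb : ∃ d ∈ S, E2 b d
        · obtain ⟨d, hd, hbd⟩ := hdb
          refine ⟨c d, fun e he heb => ⟨fun h => (hda ⟨e, he, heb, h⟩).elim, fun h => ?_⟩⟩
          rw [f2 _ _ _ h hbd]; simp
        · exact ⟨true, fun e he heb => ⟨fun h => (hda ⟨e, he, heb, h⟩).elim,
            fun h => (hdb ⟨e, he, h⟩).elim⟩⟩
    obtain ⟨x, hx⟩ := hx
    let c' : V → Bool := fun v => if v = a then x else if v = b then !x else c v
    have ca : c' a = x := by simp [c']
    have cb : c' b = !x := by simp [c', hab'.symm]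
    have co : ∀ v, v ≠ a → v ≠ b → c' v = c v := by
      intro v h1 h2; simp [c', h1, h2]
    have key : ∀ u ∈ S, ∀ v ∈ S, (E1 u v ∨ E2 u v) → u = a ∨ u = b → c' u ≠ c' v := by
      intro u hu v hv huv hab2
      have huv' : u ≠ v := by rintro rfl; exact huv.elim (i1 u) (i2 u)
      by_cases h2 : v = a ∨ v = b
      · rcases hab2 with h | h <;> rcases h2 with h' | h'
        · exact absurd (h.trans h'.symm) huv'
        · rw [h, h', ca, cb]; cases x <;> decide
        · rw [h, h', ca, cb]; cases x <;> decide
        · exact absurd (h.trans h'.symm) huv'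
      · push Not at h2
        rcases huv with h | h
        · rcases hab2 with rfl | rfl
          · exact absurd (f1 _ _ _ h hab) h2.2
          · exact absurd (f1 _ _ _ h (s1 _ _ hab)) h2.1
        · rw [co v h2.1 h2.2]
          rcases hab2 with rfl | rfl
          · rw [ca]; exact (hx v hv h2.2).1 h
          · rw [cb]; exact (hx v hv h2.2).2 h
    refine ⟨c', fun u hu v hv huv => ?_⟩
    by_cases h1 : u = a ∨ u = b
    · exact key u hu v hv huv h1
    by_cases h2 : v = a ∨ v = b
    · exact (key v hv u hu (huv.imp (s1 _ _) (s2 _ _)) h2).symm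
    push Not at h1 h2
    rw [co u h1.1 h1.2, co v h2.1 h2.2]
    have huv' : u ≠ v := by rintro rfl; exact huv.elim (i1 u) (i2 u)
    exact hc u (by simp [*]) v (by simp [*])
      (huv.imp id (fun h => ⟨huv', h1.1, h1.2, h2.1, h2.2, Or.inl h⟩))
  · obtain ⟨c, hc⟩ := ih _ hpos (S.erase a) rfl E1 E2 s1 s2 i1 i2 f1 f2
    by_cases hd : ∃ d, E2 a d
    · obtain ⟨d, hd⟩ := hd
      refine ⟨Function.update c a (! c d), ?_⟩
      intro u hu v hv huv
      have hda : d ≠ a := fun h => i2 a (h ▸ hd)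
      by_cases hua : u = a
      · subst hua
        have : v = d := by grind
        subst this
        simp [Function.update_of_ne hda]
      · by_cases hva : v = a
        · subst hva
          have : u = d := by grind
          subst this
          simp [Function.update_of_ne hda]
        · rw [Function.update_of_ne hva, Function.update_of_ne hua]
          exact hc u (by grind) v (by grind) huv
    · refine ⟨c, fun u hu v hv huv => hc u ?_ v ?_ huv⟩
      · grind
      · grind

def AuxOrd {V ι : Type*} (p : ι → Fin 3 → V) (v : V) : Prop := ∀ i k, v ≠ p i k

structure AuxSetup {V ι : Type*} (G F : SimpleGraph V) (p : ι → Fin 3 → V) (A : ι → Prop) :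
    Prop where
  inj : ∀ i k j l, p i k = p j l → i = j ∧ k = l
  adj : ∀ i k l, k ≠ l → G.Adj (p i k) (p i l)
  fle : ∀ u v, F.Adj u v → G.Adj u v
  split : ∀ i k w, G.Adj (p i k) w → F.Adj (p i k) w ∨ ∃ l, l ≠ k ∧ w = p i l
  ford : ∀ v w, AuxOrd p v → G.Adj v w → F.Adj v w
  fne : ∀ i k l, ¬ F.Adj (p i k) (p i l)
  deg2 : ∀ v, AuxOrd p v → ∀ a b c, G.Adj v a → G.Adj v b → G.Adj v c → a = b ∨ a = c ∨ b = c
  ext : ∀ i k e e', F.Adj (p i k) e → F.Adj (p i k) e' → e = e'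
  az : ∀ i e, A i → ¬ F.Adj (p i 2) e
  bo : ∀ i k e, ¬ A i → F.Adj (p i k) e → AuxOrd p e
  own : ∀ i j, F.Reachable (p i 0) (p j 0) → i = j

structure AuxInd {V ι : Type*} (G F : SimpleGraph V) (p : ι → Fin 3 → V) (A : ι → Prop)
    (I : Set V) : Prop where
  ind : ∀ a ∈ I, ∀ b ∈ I, ¬ G.Adj a b
  c1 : ∀ i, ¬ A i → p i 0 ∈ I
  c2 : ∀ i k, ¬ A i → k ≠ 0 → p i k ∉ I
  c3 : ∀ i, A i → p i 0 ∉ I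
  c4 : ∀ i, A i → p i 1 ∈ I → ∃ e, F.Adj (p i 1) e ∧ ¬ AuxOrd p e
  c5 : ∀ v, AuxOrd p v → v ∉ I → ∃ a ∈ I, G.Adj v a
  c5' : ∀ i, A i → p i 2 ∉ I → p i 1 ∈ I
  c6 : ∀ v i k, AuxOrd p v → G.Adj v (p i k) → v ∉ I →
    ∃ a ∈ I, G.Adj v a ∧ (AuxOrd p a → ∃ j l, G.Adj a (p j l))
  c7 : ∀ i e, A i → F.Adj (p i 1) e → ¬ AuxOrd p e → p i 1 ∉ I → e ∈ I
  c8 : ∀ i e, A i → AuxOrd p e → F.Adj (p i 0) e → e ∈ I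

theorem aux_ind {V ι : Type*} [Finite V] {G F : SimpleGraph V} {p : ι → Fin 3 → V}
    {A : ι → Prop} (hs : AuxSetup G F p A) : ∃ I, AuxInd G F p A I := by
  classical
  obtain ⟨inj, adj, fle, split, ford, fne, deg2, ext, az, bo, own⟩ := hs
  let S1 : Set V := {v | (∃ i, ¬ A i ∧ v = p i 0) ∨ (AuxOrd p v ∧ ∃ i, A i ∧ F.Adj (p i 0) v)}
  let W2 : Set V := {v | (∃ i, A i ∧ v = p i 1 ∧ ∃ e, F.Adj (p i 1) e ∧ ¬ AuxOrd p e) ∨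
    (AuxOrd p v ∧ ∃ i k, G.Adj v (p i k))}
  let W3 : Set V := {v | AuxOrd p v ∨ ∃ i, A i ∧ v = p i 2}
  have hS1 : ∀ a ∈ S1, ∀ b ∈ S1, ¬ G.Adj a b := by
    have mix : ∀ i j b, ¬ A i → AuxOrd p b → A j → F.Adj (p j 0) b → ¬ G.Adj (p i 0) b := by
      intro i j b hi hb hj hjb h
      have h1 := ford b _ hb h.symm
      have := own i j (h1.symm.reachable.trans hjb.symm.reachable)
      exact hi (this ▸ hj)
    rintro a (⟨i, hi, rfl⟩ | ⟨ha, i, hi, hia⟩) b (⟨j, hj, rfl⟩ | ⟨hb, j, hj, hjb⟩) hab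
    · rcases split _ _ _ hab with h | ⟨l, hl, h⟩
      · have := own i j h.reachable
        subst this
        exact G.loopless.irrefl _ hab
      · exact hl (inj _ _ _ _ h).2.symm
    · exact mix i j b hi hb hj hjb hab
    · exact mix j i a hj ha hi hia hab.symm
    · have := own i j (hia.reachable.trans ((ford _ _ ha hab).reachable.trans hjb.symm.reachable))
      subst this
      have := ext _ _ _ _ hia hjb
      subst this
      exact G.loopless.irrefl _ hab
  obtain ⟨I2, hI2a, hI2b, hI2c, hI2d⟩ := aux_mis G S1 W2 hS1
  obtain ⟨I, hIa, hIb, hIc, hId⟩ := aux_mis G I2 W3 hI2c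
  have memI : ∀ i k, p i k ∈ I → (¬ A i ∧ k = 0) ∨ (A i ∧ k = 2 ∧ p i k ∉ I2) ∨
      (A i ∧ k = 1 ∧ ∃ e, F.Adj (p i 1) e ∧ ¬ AuxOrd p e) := by
    intro i k h
    by_cases h2 : p i k ∈ I2
    · rcases hI2b _ h2 with (⟨j, hj, h⟩ | ⟨h, _⟩) | (⟨j, hj, h, h'⟩ | ⟨h, _⟩)
      · obtain ⟨rfl, rfl⟩ := inj _ _ _ _ h
        exact Or.inl ⟨hj, rfl⟩
      · exact absurd rfl (h i k)
      · obtain ⟨rfl, rfl⟩ := inj _ _ _ _ h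
        exact Or.inr (Or.inr ⟨hj, rfl, h'⟩)
      · exact absurd rfl (h i k)
    · rcases hIb _ h with h' | (h | ⟨j, hj, h⟩)
      · exact absurd h' h2
      · exact absurd rfl (h i k)
      · obtain ⟨rfl, rfl⟩ := inj _ _ _ _ h
        exact Or.inr (Or.inl ⟨hj, rfl, h2⟩)
  have c3 : ∀ i, A i → p i 0 ∉ I := by
    intro i hi h
    rcases memI _ _ h with ⟨h, _⟩ | ⟨_, h, _⟩ | ⟨_, h, _⟩
    · exact h hi
    · exact absurd h (by decide)
    · exact absurd h (by decide)
  refine ⟨I, hIc, ?_, ?_, c3, ?_, ?_, ?_, ?_, ?_, ?_⟩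
  · exact fun i hi => hIa (hI2a (Or.inl ⟨i, hi, rfl⟩))
  · intro i k hi hk h
    rcases memI _ _ h with ⟨_, h⟩ | ⟨h, _⟩ | ⟨h, _⟩
    · exact hk h
    · exact hi h
    · exact hi h
  · intro i hi h
    rcases memI _ _ h with ⟨h, _⟩ | ⟨_, h, _⟩ | ⟨_, _, h⟩
    · exact absurd hi h
    · exact absurd h (by decide)
    · exact h
  · exact fun v hv hvI => hId v (Or.inl hv) hvI
  · intro i hi h
    obtain ⟨a, ha, haa⟩ := hId _ (Or.inr ⟨i, hi, rfl⟩) h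
    rcases split _ _ _ haa with h' | ⟨l, hl, rfl⟩
    · exact absurd h' (az _ _ hi)
    · fin_cases l
      · exact absurd ha (c3 i hi)
      · exact ha
      · exact absurd rfl hl
  · intro v i k hv hvk hvI
    obtain ⟨a, ha, haa⟩ := hI2d v (Or.inr ⟨hv, i, k, hvk⟩) (fun h => hvI (hIa h))
    refine ⟨a, hIa ha, haa, fun hao => ?_⟩
    rcases hI2b _ ha with (⟨j, hj, h⟩ | ⟨_, j, _, h⟩) | (⟨j, hj, h, h'⟩ | ⟨_, h⟩)
    · exact absurd h (hao _ _)
    · exact ⟨j, 0, (fle _ _ h).symm⟩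
    · exact absurd h (hao _ _)
    · exact h
  · intro i e hi he heo hI
    obtain ⟨a, ha, haa⟩ := hI2d (p i 1) (Or.inl ⟨i, hi, rfl, e, he, heo⟩) (fun h => hI (hIa h))
    rcases split _ _ _ haa with h' | ⟨l, hl, rfl⟩
    · rw [ext _ _ _ _ he h']; exact hIa ha
    · fin_cases l
      · exact absurd (hIa ha) (c3 i hi)
      · exact absurd rfl hl
      · rcases memI _ _ (hIa ha) with ⟨h, _⟩ | ⟨_, _, h⟩ | ⟨_, h, _⟩
        · exact absurd hi h
        · exact absurd ha h
        · exact absurd h (by decide)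
  · exact fun i e hi heo he => hIa (hI2a (Or.inr ⟨heo, i, hi, he⟩))

def AuxH {V : Type*} (G : SimpleGraph V) (I : Set V) (u v : V) : Prop :=
  u ≠ v ∧ u ∉ I ∧ v ∉ I ∧ (G.Adj u v ∨ ∃ w, G.Adj u w ∧ G.Adj w v)

set_option maxHeartbeats 2000000 in
theorem aux_phase2 {V ι : Type*} [Fintype V] {G F : SimpleGraph V} {p : ι → Fin 3 → V}
    {A : ι → Prop} (hs : AuxSetup G F p A) :
    ∃ (I : Set V) (c : V → Fin 3), (∀ a ∈ I, ∀ b ∈ I, ¬ G.Adj a b) ∧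
      ∀ u v, AuxH G I u v → c u ≠ c v := by
  classical
  obtain ⟨I, hI⟩ := aux_ind hs
  obtain ⟨inj, adj, fle, split, ford, fne, deg2, ext, az, bo, own⟩ := hs
  obtain ⟨ind, c1, c2, c3, c4, c5, c5', c6, c7, c8⟩ := hI
  let D : V → Prop := fun v => AuxOrd p v ∧ v ∉ I ∧ ∃ i k, ¬ A i ∧ G.Adj v (p i k)
  let Bo : V → Prop := fun v => ∃ i k, ¬ A i ∧ k ≠ 0 ∧ v = p i k
  let L : V → Prop := fun v => ¬ D v ∧ ¬ Bo v ∧ v ∉ I ∧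
    ∃ a b, ∀ w, AuxH G I v w → w = a ∨ w = b
  have Hs : ∀ u v, AuxH G I u v → AuxH G I v u := by
    rintro u v ⟨h1, h2, h3, h4⟩
    exact ⟨h1.symm, h3, h2, h4.imp (fun h => h.symm) (fun ⟨w, a, b⟩ => ⟨w, b.symm, a.symm⟩)⟩
  have Hi : ∀ u, ¬ AuxH G I u u := fun u h => h.1 rfl
  have nord : ∀ i k, ¬ AuxOrd p (p i k) := fun i k h => h i k rfl
  have nb : ∀ i k w, G.Adj (p i k) w →
      F.Adj (p i k) w ∨ (w = p i 0 ∧ k ≠ 0) ∨ (w = p i 1 ∧ k ≠ 1) ∨ (w = p i 2 ∧ k ≠ 2) := by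
    intro i k w h
    rcases split i k w h with h | ⟨l, hl, rfl⟩
    · exact Or.inl h
    · fin_cases l
      · exact Or.inr (Or.inl ⟨rfl, hl.symm⟩)
      · exact Or.inr (Or.inr (Or.inl ⟨rfl, hl.symm⟩))
      · exact Or.inr (Or.inr (Or.inr ⟨rfl, hl.symm⟩))
  have ord1 : ∀ e v, AuxOrd p e → G.Adj e v → ∃ w0, ∀ w, G.Adj e w → w ≠ v → w = w0 := by
    intro e v he hev
    by_cases h : ∃ w, G.Adj e w ∧ w ≠ v
    · obtain ⟨w0, h0, h1⟩ := h
      refine ⟨w0, fun w hw hwv => ?_⟩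
      rcases deg2 e he v w w0 hev hw h0 with h | h | h
      · exact absurd h.symm hwv
      · exact absurd h.symm h1
      · exact h
    · exact ⟨v, fun w hw hwv => (h ⟨w, hw, hwv⟩).elim⟩
  have fex : ∀ i k, ∃ f, ∀ w, F.Adj (p i k) w → w = f := by
    intro i k
    by_cases h : ∃ f, F.Adj (p i k) f
    · obtain ⟨f, hf⟩ := h
      exact ⟨f, fun w hw => ext _ _ _ _ hw hf⟩
    · exact ⟨p i k, fun w hw => (h ⟨w, hw⟩).elim⟩
  have cov : ∀ v, ¬ AuxOrd p v → ∃ i k, v = p i k := by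
    intro v hv
    simpa [AuxOrd] using hv
  have notcore : ∀ i k, A i → ¬ D (p i k) ∧ ¬ Bo (p i k) := by
    intro i k hi
    refine ⟨fun h => nord i k h.1, ?_⟩
    rintro ⟨j, l, hj, _, h⟩
    exact hj ((inj _ _ _ _ h).1 ▸ hi)
  -- F-neighbours of A vertices which are covered lie in A triangles
  have AA : ∀ i k j l, A i → F.Adj (p i k) (p j l) → A j ∧ l ≠ 2 := by
    intro i k j l hi h
    have hj : A j := by
      by_contra hj
      exact nord i k (bo j l _ hj h.symm)
    refine ⟨hj, ?_⟩
    rintro rfl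
    exact az j _ hj h.symm
  have EY : ∀ i e, A i → F.Adj (p i 0) e → e ∈ I := by
    intro i e hi he
    by_cases ho : AuxOrd p e
    · exact c8 i e hi ho he
    obtain ⟨j, l, rfl⟩ := cov e ho
    obtain ⟨hj, hl⟩ := AA _ _ _ _ hi he
    fin_cases l
    · have := own _ _ he.reachable
      subst this
      exact absurd he (fne _ _ _)
    · by_contra hn
      exact c3 i hi (c7 j _ hj he.symm (nord _ _) hn)
    · exact absurd rfl hl
  have CZ : ∀ i, A i → p i 2 ∉ I → L (p i 2) := by
    intro i hi hz
    have hx := c5' i hi hz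
    obtain ⟨f, hf⟩ := fex i 1
    refine ⟨(notcore i 2 hi).1, (notcore i 2 hi).2, hz, p i 0, f, ?_⟩
    rintro w ⟨hw, -, hwI, h | ⟨m, hm, h⟩⟩
    · rcases nb _ _ _ h with h | ⟨h, -⟩ | ⟨h, -⟩ | ⟨h, -⟩
      · exact absurd h (az _ _ hi)
      · exact Or.inl h
      · exact absurd (h ▸ hx) hwI
      · exact absurd h.symm hw
    · rcases nb _ _ _ hm with hm | ⟨rfl, -⟩ | ⟨rfl, -⟩ | ⟨-, hm⟩
      · exact absurd hm (az _ _ hi)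
      · rcases nb _ _ _ h with h | ⟨h, -⟩ | ⟨h, -⟩ | ⟨h, -⟩
        · exact absurd (EY i w hi h) hwI
        · exact Or.inl h
        · exact absurd (h ▸ hx) hwI
        · exact absurd h.symm hw
      · rcases nb _ _ _ h with h | ⟨h, -⟩ | ⟨h, -⟩ | ⟨h, -⟩
        · exact Or.inr (hf w h)
        · exact Or.inl h
        · exact absurd (h ▸ hx) hwI
        · exact absurd h.symm hw
      · exact absurd rfl hm
  have CE : ∀ i k e, A i → F.Adj (p i k) e → e ∈ I →
      ∃ w0, ∀ w, G.Adj e w → w ≠ p i k → w ∉ I → L w ∨ w = w0 := by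
    intro i k e hi he heI
    by_cases ho : AuxOrd p e
    · obtain ⟨w0, h⟩ := ord1 e (p i k) ho (fle _ _ he).symm
      exact ⟨w0, fun w hw hne _ => Or.inr (h w hw hne)⟩
    obtain ⟨j, l, rfl⟩ := cov e ho
    obtain ⟨hj, hl⟩ := AA _ _ _ _ hi he
    have hl0 : l ≠ 0 := by
      rintro rfl
      exact c3 j hj heI
    refine ⟨p j 0, fun w hw hne hwI => ?_⟩
    rcases nb _ _ _ hw with h | ⟨h, -⟩ | ⟨h, h'⟩ | ⟨h, -⟩
    · exact absurd (ext _ _ _ _ h he.symm) hne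
    · exact Or.inr h
    · fin_cases l
      · exact absurd rfl hl0
      · exact absurd rfl h'
      · exact absurd rfl hl
    · subst h
      exact Or.inl (CZ j hj hwI)
  have CX : ∀ i f, A i → p i 1 ∉ I → F.Adj (p i 1) f → f ∉ I → L (p i 1) := by
    intro i f hi hx hf hfI
    have hz : p i 2 ∈ I := by
      by_contra hz
      exact hx (c5' i hi hz)
    have hfo : AuxOrd p f := by
      by_contra ho
      exact hfI (c7 i f hi hf ho hx)
    obtain ⟨g, hgI, hg⟩ := c5 f hfo hfI
    have hgx : p i 1 ≠ g := by
      rintro rfl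
      exact hx hgI
    obtain ⟨w0, hw0⟩ := ord1 f (p i 1) hfo (fle _ _ hf).symm
    have hg0 := hw0 g hg hgx.symm
    refine ⟨(notcore i 1 hi).1, (notcore i 1 hi).2, hx, p i 0, f, ?_⟩
    rintro w ⟨hw, -, hwI, h | ⟨m, hm, h⟩⟩
    · rcases nb _ _ _ h with h | ⟨h, -⟩ | ⟨h, -⟩ | ⟨h, -⟩
      · exact Or.inr (ext _ _ _ _ h hf)
      · exact Or.inl h
      · exact absurd h.symm hw
      · exact absurd (h ▸ hz) hwI
    · rcases nb _ _ _ hm with hm | ⟨rfl, -⟩ | ⟨-, hm⟩ | ⟨rfl, -⟩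
      · obtain rfl := ext _ _ _ _ hm hf
        have := hw0 w h hw.symm
        exact absurd ((this.trans hg0.symm) ▸ hgI) hwI
      · rcases nb _ _ _ h with h | ⟨h, -⟩ | ⟨h, -⟩ | ⟨h, -⟩
        · exact absurd (EY i w hi h) hwI
        · exact Or.inl h
        · exact absurd h.symm hw
        · exact absurd (h ▸ hz) hwI
      · exact absurd rfl hm
      · rcases nb _ _ _ h with h | ⟨h, -⟩ | ⟨h, -⟩ | ⟨h, -⟩
        · exact absurd h (az _ _ hi)
        · exact Or.inl h
        · exact absurd h.symm hw
        · exact absurd (h ▸ hz) hwI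
  have DX : ∀ i, A i → p i 1 ∉ I → ∃ a b, ∀ w, AuxH G I (p i 1) w → L w ∨ w = a ∨ w = b := by
    intro i hi hx
    have hz : p i 2 ∈ I := by
      by_contra hz
      exact hx (c5' i hi hz)
    by_cases hf : ∃ f, F.Adj (p i 1) f ∧ f ∉ I
    · obtain ⟨f, hf, hfI⟩ := hf
      obtain ⟨-, -, -, a, b, h⟩ := CX i f hi hx hf hfI
      exact ⟨a, b, fun w hw => Or.inr (h w hw)⟩
    have hw0 : ∃ w0, ∀ f w, F.Adj (p i 1) f → G.Adj f w → w ≠ p i 1 → w ∉ I → L w ∨ w = w0 := by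
      by_cases hf2 : ∃ f, F.Adj (p i 1) f
      · obtain ⟨f, hf2⟩ := hf2
        have hfI : f ∈ I := by
          by_contra hh
          exact hf ⟨f, hf2, hh⟩
        obtain ⟨w0, h⟩ := CE i 1 f hi hf2 hfI
        refine ⟨w0, fun f' w h1 h2 h3 h4 => h w ?_ h3 h4⟩
        rw [ext _ _ _ _ hf2 h1]; exact h2
      · exact ⟨p i 0, fun f w h => (hf2 ⟨f, h⟩).elim⟩
    obtain ⟨w0, hw0⟩ := hw0
    refine ⟨p i 0, w0, ?_⟩
    rintro w ⟨hw, -, hwI, h | ⟨m, hm, h⟩⟩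
    · rcases nb _ _ _ h with h | ⟨h, -⟩ | ⟨h, -⟩ | ⟨h, -⟩
      · exact absurd ⟨w, h, hwI⟩ hf
      · exact Or.inr (Or.inl h)
      · exact absurd h.symm hw
      · exact absurd (h ▸ hz) hwI
    · rcases nb _ _ _ hm with hm | ⟨rfl, -⟩ | ⟨-, hm⟩ | ⟨rfl, -⟩
      · rcases hw0 m w hm h hw.symm hwI with h | h
        · exact Or.inl h
        · exact Or.inr (Or.inr h)
      · rcases nb _ _ _ h with h | ⟨h, -⟩ | ⟨h, -⟩ | ⟨h, -⟩
        · exact absurd (EY i w hi h) hwI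
        · exact Or.inr (Or.inl h)
        · exact absurd h.symm hw
        · exact absurd (h ▸ hz) hwI
      · exact absurd rfl hm
      · rcases nb _ _ _ h with h | ⟨h, -⟩ | ⟨h, -⟩ | ⟨h, -⟩
        · exact absurd h (az _ _ hi)
        · exact Or.inr (Or.inl h)
        · exact absurd h.symm hw
        · exact absurd (h ▸ hz) hwI
  have DY : ∀ i, A i → ∃ a b, ∀ w, AuxH G I (p i 0) w → L w ∨ w = a ∨ w = b := by
    intro i hi
    have hw0 : ∃ w0, ∀ f w, F.Adj (p i 0) f → G.Adj f w → w ≠ p i 0 → w ∉ I → L w ∨ w = w0 := by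
      by_cases hf2 : ∃ f, F.Adj (p i 0) f
      · obtain ⟨f, hf2⟩ := hf2
        obtain ⟨w0, h⟩ := CE i 0 f hi hf2 (EY i f hi hf2)
        refine ⟨w0, fun f' w h1 h2 h3 h4 => h w ?_ h3 h4⟩
        rw [ext _ _ _ _ hf2 h1]; exact h2
      · exact ⟨p i 0, fun f w h => (hf2 ⟨f, h⟩).elim⟩
    obtain ⟨w0, hw0⟩ := hw0
    -- the vertices seen inside the triangle and through `p i 1`
    have hv : ∃ a, ∀ w, w ∉ I → (w = p i 1 ∨ w = p i 2 ∨ F.Adj (p i 1) w) → L w ∨ w = a := by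
      by_cases hx : p i 1 ∈ I
      · obtain ⟨f, hf⟩ := fex i 1
        refine ⟨f, ?_⟩
        rintro w hwI (rfl | rfl | h)
        · exact absurd hx hwI
        · exact Or.inl (CZ i hi hwI)
        · exact Or.inr (hf w h)
      · have hz : p i 2 ∈ I := by
          by_contra hz
          exact hx (c5' i hi hz)
        by_cases hf : ∃ f, F.Adj (p i 1) f ∧ f ∉ I
        · obtain ⟨f, hf, hfI⟩ := hf
          refine ⟨f, ?_⟩
          rintro w hwI (rfl | rfl | h)
          · exact Or.inl (CX i f hi hx hf hfI)
          · exact absurd hz hwI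
          · exact Or.inr (ext _ _ _ _ h hf)
        · refine ⟨p i 1, ?_⟩
          rintro w hwI (rfl | rfl | h)
          · exact Or.inr rfl
          · exact absurd hz hwI
          · exact absurd ⟨w, h, hwI⟩ hf
    obtain ⟨a, hv⟩ := hv
    refine ⟨a, w0, ?_⟩
    have hv' : ∀ w, w ∉ I → (w = p i 1 ∨ w = p i 2 ∨ F.Adj (p i 1) w) → L w ∨ w = a ∨ w = w0 :=
      fun w h1 h2 => (hv w h1 h2).imp id Or.inl
    rintro w ⟨hw, -, hwI, h | ⟨m, hm, h⟩⟩
    · rcases nb _ _ _ h with h | ⟨h, -⟩ | ⟨h, -⟩ | ⟨h, -⟩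
      · exact absurd (EY i w hi h) hwI
      · exact absurd h.symm hw
      · exact hv' w hwI (Or.inl h)
      · exact hv' w hwI (Or.inr (Or.inl h))
    · rcases nb _ _ _ hm with hm | ⟨-, hm⟩ | ⟨rfl, -⟩ | ⟨rfl, -⟩
      · exact (hw0 m w hm h hw.symm hwI).imp id Or.inr
      · exact absurd rfl hm
      · rcases nb _ _ _ h with h | ⟨h, -⟩ | ⟨h, -⟩ | ⟨h, -⟩
        · exact hv' w hwI (Or.inr (Or.inr h))
        · exact absurd h.symm hw
        · exact hv' w hwI (Or.inl h)
        · exact hv' w hwI (Or.inr (Or.inl h))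
      · rcases nb _ _ _ h with h | ⟨h, -⟩ | ⟨h, -⟩ | ⟨h, -⟩
        · exact absurd h (az _ _ hi)
        · exact absurd h.symm hw
        · exact hv' w hwI (Or.inl h)
        · exact hv' w hwI (Or.inr (Or.inl h))
  have DO : ∀ q, AuxOrd p q → q ∉ I → ¬ D q →
      ∃ a b, ∀ w, AuxH G I q w → L w ∨ w = a ∨ w = b := by
    intro q hq hqI hqD
    have hnB : ∀ i k, G.Adj q (p i k) → A i := by
      intro i k h
      by_contra hi
      exact hqD ⟨hq, hqI, i, k, hi, h⟩
    have Iord : ∀ a, a ∈ I → G.Adj q a → AuxOrd p a := by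
      intro a ha hqa
      by_contra ho
      obtain ⟨i, k, rfl⟩ := cov a ho
      have hi := hnB _ _ hqa
      have hF := (ford _ _ hq hqa).symm
      fin_cases k
      · exact c3 i hi ha
      · obtain ⟨e, he, heo⟩ := c4 i hi ha
        exact heo (ext _ _ _ _ he hF ▸ hq)
      · exact az i _ hi hF
    obtain ⟨a, haI, hqa⟩ := c5 q hq hqI
    obtain ⟨a2, ha2⟩ := ord1 a q (Iord a haI hqa) hqa.symm
    obtain ⟨b, hb⟩ := ord1 q a hq hqa
    -- through b
    have hv : ∃ b2, ∀ w, w ≠ q → w ∉ I → G.Adj q b → b ≠ a → (w = b ∨ G.Adj b w) →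
        L w ∨ w = b2 := by
      by_cases hqb : G.Adj q b ∧ b ≠ a
      swap
      · exact ⟨a, fun w _ _ h1 h2 => (hqb ⟨h1, h2⟩).elim⟩
      obtain ⟨hqb, -⟩ := hqb
      by_cases hbI : b ∈ I
      · obtain ⟨b2, hb2⟩ := ord1 b q (Iord b hbI hqb) hqb.symm
        refine ⟨b2, ?_⟩
        rintro w hwq hwI - - (rfl | h)
        · exact absurd hbI hwI
        · exact Or.inr (hb2 w h hwq)
      by_cases hbo : AuxOrd p b
      · obtain ⟨g, hgI, hg⟩ := c5 b hbo hbI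
        obtain ⟨b2, hb2⟩ := ord1 b q hbo hqb.symm
        have hgq : g ≠ q := by
          rintro rfl
          exact hqI hgI
        refine ⟨b, ?_⟩
        rintro w hwq hwI - - (rfl | h)
        · exact Or.inr rfl
        · have : w = g := (hb2 w h hwq).trans (hb2 g hg hgq).symm
          exact absurd (this ▸ hgI) hwI
      obtain ⟨i, k, rfl⟩ := cov b hbo
      have hi := hnB _ _ hqb
      have hF := (ford _ _ hq hqb).symm
      fin_cases k
      · exact absurd (c8 i q hi hq hF) hqI
      · have hz : p i 2 ∈ I := by
          by_contra hz
          exact hbI (c5' i hi hz)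
        refine ⟨p i 0, ?_⟩
        rintro w hwq hwI - - (rfl | h)
        · exact Or.inl (CX i q hi hbI hF hqI)
        · rcases nb _ _ _ h with h | ⟨h, -⟩ | ⟨h, h'⟩ | ⟨h, -⟩
          · exact absurd (ext _ _ _ _ h hF) hwq
          · exact Or.inr h
          · exact absurd rfl h'
          · exact absurd (h ▸ hz) hwI
      · exact absurd hF (az i _ hi)
    obtain ⟨b2, hv⟩ := hv
    refine ⟨a2, b2, ?_⟩
    rintro w ⟨hw, -, hwI, h | ⟨m, hm, h⟩⟩
    · have hwa : w ≠ a := by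
        rintro rfl
        exact hwI haI
      have := hb w h hwa
      exact (hv w hw.symm hwI (this ▸ h) (this ▸ hwa) (Or.inl this)).imp id Or.inr
    · by_cases hma : m = a
      · subst hma
        exact Or.inr (Or.inl (ha2 w h hw.symm))
      · have := hb m hm hma
        subst this
        exact (hv w hw.symm hwI hm hma (Or.inr h)).imp id Or.inr
  have DAll : ∀ v, v ∉ I → ¬ D v → ¬ Bo v → ∃ a b, ∀ w, AuxH G I v w → L w ∨ w = a ∨ w = b := by
    intro v hvI hvD hvB
    by_cases ho : AuxOrd p v
    · exact DO v ho hvI hvD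
    obtain ⟨i, k, rfl⟩ := cov v ho
    have hi : A i := by
      by_contra hi
      by_cases hk : k = 0
      · exact hvI (hk ▸ c1 i hi)
      · exact hvB ⟨i, k, hi, hk, rfl⟩
    fin_cases k
    · exact DY i hi
    · exact DX i hi hvI
    · obtain ⟨-, -, -, a, b, h⟩ := CZ i hi hvI
      exact ⟨a, b, fun w hw => Or.inr (h w hw)⟩
  -- the core
  have DD : ∀ d d', D d → D d' → ¬ AuxH G I d d' := by
    have key : ∀ d m, D d → G.Adj d m → (m ∈ I → ∀ j l, ¬ G.Adj m (p j l)) → AuxOrd p m → ∃ i, G.Adj d (p i 0) := by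
      rintro d m ⟨hd, hdI, i, k, hi, h⟩ hm hmI hmo
      obtain ⟨a, haI, hda, hac⟩ := c6 d i k hd h hdI
      have h1 : a ≠ m := by
        rintro rfl
        obtain ⟨j, l, hjl⟩ := hac hmo
        exact hmI haI j l hjl
      have h2 : m ≠ p i k := hmo i k
      rcases deg2 d hd a m (p i k) hda hm h with h' | h' | h'
      · exact absurd h' h1
      · subst h'
        by_cases hk : k = 0
        · exact ⟨i, hk ▸ hda⟩
        · exact absurd haI (c2 i k hi hk)
      · exact absurd h' h2
    rintro d d' hd hd' ⟨hne, hdI, hdI', h | ⟨m, hm, h⟩⟩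
    · obtain ⟨i, hi⟩ := key d d' hd h (fun hh => absurd hh hdI') hd'.1
      obtain ⟨j, hj⟩ := key d' d hd' h.symm (fun hh => absurd hh hdI) hd.1
      have f1 := ford _ _ hd.1 hi
      have f2 := ford _ _ hd'.1 hj
      have := own i j (f1.symm.reachable.trans ((ford _ _ hd.1 h).reachable.trans f2.reachable))
      subst this
      exact hne (ext _ _ _ _ f1.symm f2.symm)
    · by_cases hmo : AuxOrd p m
      · have hmI : m ∈ I → ∀ j l, ¬ G.Adj m (p j l) := by
          intro _ j l hjl
          rcases deg2 m hmo d d' (p j l) hm.symm h hjl with h' | h' | h'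
          · exact hne h'
          · exact hd.1 _ _ h'
          · exact hd'.1 _ _ h'
        obtain ⟨i, hi⟩ := key d m hd hm hmI hmo
        obtain ⟨j, hj⟩ := key d' m hd' h.symm hmI hmo
        have f1 := ford _ _ hd.1 hi
        have f2 := ford _ _ hd'.1 hj
        have := own i j (f1.symm.reachable.trans ((ford _ _ hd.1 hm).reachable.trans
          ((ford _ _ hmo h).reachable.trans f2.reachable)))
        subst this
        exact hne (ext _ _ _ _ f1.symm f2.symm)
      · obtain ⟨i, k, rfl⟩ := cov m hmo
        exact hne (ext _ _ _ _ (ford _ _ hd.1 hm).symm (ford _ _ hd'.1 h.symm).symm)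
  let E1 : V → V → Prop := fun u v => ∃ i, (u = p i 1 ∧ v = p i 2) ∨ (u = p i 2 ∧ v = p i 1)
  let E2 : V → V → Prop := fun u v => u ≠ v ∧ ¬ AuxOrd p u ∧ ¬ AuxOrd p v ∧
    ∃ w, AuxOrd p w ∧ G.Adj w u ∧ G.Adj w v
  have ne12 : ∀ i j, p i 1 ≠ p j 2 := by
    intro i j h
    exact absurd (inj _ _ _ _ h).2 (by decide)
  obtain ⟨b, hb⟩ := aux_two (Finset.univ : Finset V).card Finset.univ rfl E1 E2
    (by
      rintro u v ⟨i, h | h⟩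
      · exact ⟨i, Or.inr ⟨h.2, h.1⟩⟩
      · exact ⟨i, Or.inl ⟨h.2, h.1⟩⟩)
    (by
      rintro u v ⟨h1, h2, h3, w, h4, h5, h6⟩
      exact ⟨h1.symm, h3, h2, w, h4, h6, h5⟩)
    (by
      rintro u ⟨i, ⟨h, h'⟩ | ⟨h, h'⟩⟩
      · exact ne12 _ _ (h.symm.trans h')
      · exact ne12 _ _ (h'.symm.trans h))
    (fun u h => h.1 rfl)
    (by
      rintro u v w ⟨i, ⟨h, h'⟩ | ⟨h, h'⟩⟩ ⟨j, ⟨g, g'⟩ | ⟨g, g'⟩⟩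
      · rw [h', g', (inj _ _ _ _ (h.symm.trans g)).1]
      · exact absurd (h.symm.trans g) (ne12 _ _)
      · exact absurd (g.symm.trans h) (ne12 _ _)
      · rw [h', g', (inj _ _ _ _ (h.symm.trans g)).1])
    (by
      rintro u v w ⟨h1, h2, h3, x, h4, h5, h6⟩ ⟨g1, g2, g3, y, g4, g5, g6⟩
      obtain ⟨i, k, rfl⟩ := cov u h2
      obtain rfl := ext _ _ _ _ (ford _ _ h4 h5).symm (ford _ _ g4 g5).symm
      rcases deg2 x h4 _ _ _ h5 h6 g6 with h | h | h
      · exact absurd h h1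
      · exact absurd h g1
      · exact h)
  have BB : ∀ u v, Bo u → Bo v → AuxH G I u v → E1 u v ∨ E2 u v := by
    rintro u v ⟨i, k, hi, hk, rfl⟩ ⟨j, l, hj, hl, rfl⟩ ⟨hne, -, -, h⟩
    by_cases hij : i = j
    · subst hij
      left
      refine ⟨i, ?_⟩
      fin_cases k <;> fin_cases l <;> simp at hk hl hne ⊢
    · right
      have nF : ¬ G.Adj (p i k) (p j l) := by
        intro h
        rcases split _ _ _ h with h | ⟨l', _, h⟩
        · exact nord _ _ (bo _ _ _ hi h)
        · exact hij (inj _ _ _ _ h).1.symm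
      rcases h with h | ⟨w, h1, h2⟩
      · exact absurd h nF
      · refine ⟨hne, nord _ _, nord _ _, w, ?_, h1.symm, h2⟩
        rcases split _ _ _ h1 with h | ⟨l', _, rfl⟩
        · exact bo _ _ _ hi h
        · exfalso
          rcases split _ _ _ h2.symm with h | ⟨l'', _, h⟩
          · exact nord _ _ (bo _ _ _ hj h)
          · exact hij (inj _ _ _ _ h).1
  have DB : ∀ v, D v → ¬ Bo v := by
    rintro v ⟨hv, _⟩ ⟨i, k, _, _, h⟩
    exact hv _ _ h
  let c0 : V → Fin 3 := fun v => if D v then 2 else if b v = true then 0 else 1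
  have hc0 : ∀ u ∈ {v | D v ∨ Bo v}, ∀ v ∈ {v | D v ∨ Bo v}, AuxH G I u v → c0 u ≠ c0 v := by
    have n2 : ∀ v, ¬ D v → c0 v ≠ 2 := by
      intro v hv
      simp only [c0, hv, if_false]
      split <;> decide
    have e2 : ∀ v, D v → c0 v = 2 := by
      intro v hv
      simp only [c0, hv, if_true]
    intro u hu v hv huv
    by_cases h1 : D u
    · have h2 : ¬ D v := fun h2 => DD u v h1 h2 huv
      rw [e2 u h1]
      exact (n2 v h2).symm
    · by_cases h2 : D v
      · rw [e2 v h2]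
        exact n2 u h1
      · have hb' := hb u (Finset.mem_univ _) v (Finset.mem_univ _)
          (BB u v (hu.resolve_left h1) (hv.resolve_left h2) huv)
        simp only [c0, h1, h2, if_false]
        revert hb'
        generalize b u = x
        generalize b v = y
        cases x <;> cases y <;> decide
  obtain ⟨c1', hc1'⟩ := aux_greedy (AuxH G I) Hs Hi
    (Finset.univ.filter (fun v => v ∉ I ∧ ¬ D v ∧ ¬ Bo v ∧ ¬ L v)) {v | D v ∨ Bo v} c0 hc0 (by
      intro u hu
      simp only [Finset.mem_filter, Finset.mem_univ, true_and] at hu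
      obtain ⟨x, y, h⟩ := DAll u hu.1 hu.2.1 hu.2.2.1
      refine ⟨x, y, fun w hw hw2 => (h w hw).resolve_left ?_⟩
      intro hL
      rcases hw2 with (h2 | h2) | h2
      · exact hL.1 h2
      · exact hL.2.1 h2
      · simp only [Finset.mem_filter, Finset.mem_univ, true_and] at h2
        exact h2.2.2.2 hL)
  obtain ⟨c2', hc2'⟩ := aux_greedy (AuxH G I) Hs Hi (Finset.univ.filter L)
    {v | D v ∨ Bo v ∨ (v ∉ I ∧ ¬ D v ∧ ¬ Bo v ∧ ¬ L v)} c1' (by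
      intro u hu v hv huv
      refine hc1' u ?_ v ?_ huv
      · rcases hu with h | h | h
        · exact Or.inl (Or.inl h)
        · exact Or.inl (Or.inr h)
        · exact Or.inr (by simpa using h)
      · rcases hv with h | h | h
        · exact Or.inl (Or.inl h)
        · exact Or.inl (Or.inr h)
        · exact Or.inr (by simpa using h)) (by
      intro u hu
      simp only [Finset.mem_filter, Finset.mem_univ, true_and] at hu
      obtain ⟨-, -, -, x, y, h⟩ := hu
      exact ⟨x, y, fun w hw _ => h w hw⟩)
  refine ⟨I, c2', ind, fun u v huv => hc2' u ?_ v ?_ huv⟩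
  · have := huv.2.1
    by_cases h1 : D u
    · exact Or.inl (Or.inl h1)
    by_cases h2 : Bo u
    · exact Or.inl (Or.inr (Or.inl h2))
    by_cases h3 : L u
    · exact Or.inr (by simpa using h3)
    · exact Or.inl (Or.inr (Or.inr ⟨this, h1, h2, h3⟩))
  · have := huv.2.2.1
    by_cases h1 : D v
    · exact Or.inl (Or.inl h1)
    by_cases h2 : Bo v
    · exact Or.inl (Or.inr (Or.inl h2))
    by_cases h3 : L v
    · exact Or.inr (by simpa using h3)
    · exact Or.inl (Or.inr (Or.inr ⟨this, h1, h2, h3⟩))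

theorem aux_comp {V : Type*} [Fintype V] (F : SimpleGraph V)
    (h2 : ∀ v a b c, F.Adj v a → F.Adj v b → F.Adj v c → a = b ∨ a = c ∨ b = c)
    (P : Finset V) (C : F.ConnectedComponent)
    (hP : ∀ v ∈ P, F.connectedComponentMk v = C ∧ ∀ a b, F.Adj v a → F.Adj v b → a = b) :
    P.card ≤ 2 := by
  classical
  have hc : (F.induce C.supp).Connected := C.connected_toSimpleGraph
  have h1 := hc.card_vert_le_card_edgeSet_add_one
  have hs := (F.induce C.supp).sum_degrees_eq_twice_card_edges
  rw [Nat.card_eq_fintype_card, Nat.card_eq_fintype_card] at h1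
  rw [← SimpleGraph.edgeFinset_card] at h1
  have hb : ∀ v : C.supp, (F.induce C.supp).degree v + (if v.1 ∈ P then 1 else 0) ≤ 2 := by
    intro v
    split
    · rename_i hv
      have : (F.induce C.supp).degree v ≤ 1 := by
        rw [← SimpleGraph.card_neighborFinset_eq_degree, Finset.card_le_one]
        intro a ha b hb
        rw [SimpleGraph.mem_neighborFinset] at ha hb
        exact Subtype.ext ((hP _ hv).2 _ _ ha hb)
      omega
    · have : (F.induce C.supp).degree v ≤ 2 := by
        rw [← SimpleGraph.card_neighborFinset_eq_degree]
        by_contra hcon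
        obtain ⟨a, b, c, ha, hb, hc, h⟩ := Finset.two_lt_card_iff.1 (not_le.1 hcon)
        rw [SimpleGraph.mem_neighborFinset] at ha hb hc
        rcases h2 v a b c ha hb hc with h' | h' | h'
        · exact h.1 (Subtype.ext h')
        · exact h.2.1 (Subtype.ext h')
        · exact h.2.2 (Subtype.ext h')
      omega
  have hsum := Finset.sum_le_sum (fun v (_ : v ∈ (Finset.univ : Finset C.supp)) => hb v)
  rw [Finset.sum_add_distrib, hs, ← Finset.card_filter] at hsum
  have hle : P.card ≤ ((Finset.univ : Finset C.supp).filter (fun v => v.1 ∈ P)).card := by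
    rw [← Finset.card_image_of_injective _ Subtype.val_injective]
    apply Finset.card_le_card
    intro v hv
    rw [Finset.mem_image]
    exact ⟨⟨v, (hP v hv).1⟩, by simpa using hv, rfl⟩
  simp only [Finset.sum_const, Finset.card_univ, smul_eq_mul] at hsum
  omega

theorem aux_family {V : Type*} [Fintype V] (G : SimpleGraph V) (D : V → Prop)
    (hd3 : ∀ v a b c, G.Adj v a → G.Adj v b → G.Adj v c → a ≠ b → a ≠ c → b ≠ c → D v)
    (hd4 : ∀ v a b c d, G.Adj v a → G.Adj v b → G.Adj v c → G.Adj v d →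
      a ≠ b → a ≠ c → b ≠ c → d = a ∨ d = b ∨ d = c)
    (hsat : ∀ v a b c, D v → G.Adj v a → G.Adj v b → G.Adj v c →
      a ≠ b → a ≠ c → b ≠ c → D a → D b → D c → False)
    (htri : ∀ v, D v → ∃ a b, G.Adj v a ∧ G.Adj v b ∧ G.Adj a b) :
    ∃ 𝒯 : Finset (Finset V), (∀ T ∈ 𝒯, T.card = 3 ∧ ∀ u ∈ T, ∀ v ∈ T, u ≠ v → G.Adj u v) ∧
      (∀ T ∈ 𝒯, ∀ T' ∈ 𝒯, ∀ v ∈ T, v ∈ T' → T = T') ∧ ∀ v, D v → ∃ T ∈ 𝒯, v ∈ T := by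
  classical
  let Val : Finset (Finset V) → Prop := fun 𝒯 =>
    (∀ T ∈ 𝒯, T.card = 3 ∧ ∀ u ∈ T, ∀ v ∈ T, u ≠ v → G.Adj u v) ∧
      (∀ T ∈ 𝒯, ∀ T' ∈ 𝒯, ∀ v ∈ T, v ∈ T' → T = T')
  let W : Finset (Finset V) → Finset V := fun 𝒯 =>
    Finset.univ.filter (fun v => D v ∧ ∃ T ∈ 𝒯, v ∈ T)
  obtain ⟨𝒯, h𝒯, hmax⟩ := Finset.exists_max_image
    ((Finset.univ : Finset (Finset (Finset V))).filter Val) (fun 𝒯 => (W 𝒯).card)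
    ⟨∅, by simp [Val]⟩
  simp only [Finset.mem_filter, Finset.mem_univ, true_and] at h𝒯 hmax
  refine ⟨𝒯, h𝒯.1, h𝒯.2, ?_⟩
  intro v hv
  by_contra hun
  obtain ⟨a, b, hva, hvb, hab⟩ := htri v hv
  -- main local claim
  have key : ∀ a b, G.Adj v a → G.Adj v b → G.Adj a b → ∀ T ∈ 𝒯, a ∈ T → ∀ u ∈ T, D u →
      u = a ∨ u = b := by
    intro a b hva hvb hab T hT haT u hu hDu
    by_contra hcon
    push Not at hcon
    obtain ⟨hc, hcl⟩ := h𝒯.1 T hT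
    have huv : u ≠ v := by
      rintro rfl
      exact hun ⟨T, hT, hu⟩
    have hau : G.Adj a u := hcl a haT u hu hcon.1.symm
    have hbT : b ∈ T := by
      obtain ⟨x, hx, hx2⟩ : ∃ x ∈ T, x ∉ ({a, u} : Finset V) :=
        Finset.exists_mem_notMem_of_card_lt_card
          (lt_of_le_of_lt Finset.card_le_two (by omega))
      simp only [Finset.mem_insert, Finset.mem_singleton, not_or] at hx2
      rcases hd4 a v b u x hva.symm hab hau (hcl a haT x hx (Ne.symm hx2.1))
        hvb.ne huv.symm hcon.2.symm with h | h | h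
      · subst h
        exact (hun ⟨T, hT, hx⟩).elim
      · exact h ▸ hx
      · exact (hx2.2 h).elim
    have hbu : G.Adj b u := hcl b hbT u hu hcon.2.symm
    have hDa : D a := hd3 a v b u hva.symm hab hau hvb.ne huv.symm hcon.2.symm
    have hDb : D b := hd3 b v a u hvb.symm hab.symm hbu hva.ne huv.symm hcon.1.symm
    exact hsat a v b u hDa hva.symm hab hau hvb.ne huv.symm hcon.2.symm hv hDb hDu
  let N : Finset V := {v, a, b}
  let 𝒯' : Finset (Finset V) := insert N (𝒯.filter (fun T => Disjoint T N))
  have hval : Val 𝒯' := by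
    constructor
    · intro T hT
      rcases Finset.mem_insert.1 hT with rfl | hT
      · refine ⟨Finset.card_eq_three.2 ⟨v, a, b, hva.ne, hvb.ne, hab.ne, rfl⟩, ?_⟩
        intro x hx y hy hxy
        simp only [N, Finset.mem_insert, Finset.mem_singleton] at hx hy
        rcases hx with rfl | rfl | rfl <;> rcases hy with rfl | rfl | rfl <;>
          first | exact absurd rfl hxy | assumption | (apply SimpleGraph.Adj.symm; assumption)
      · exact h𝒯.1 T (Finset.mem_filter.1 hT).1
    · intro T hT T' hT' x hx hx'
      rcases Finset.mem_insert.1 hT with rfl | hT <;>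
        rcases Finset.mem_insert.1 hT' with rfl | hT'
      · rfl
      · exact absurd hx (Finset.disjoint_left.1 (Finset.mem_filter.1 hT').2 hx')
      · exact absurd hx' (Finset.disjoint_left.1 (Finset.mem_filter.1 hT).2 hx)
      · exact h𝒯.2 T (Finset.mem_filter.1 hT).1 T' (Finset.mem_filter.1 hT').1 x hx hx'
  have hlt : (W 𝒯).card < (W 𝒯').card := by
    apply Finset.card_lt_card
    rw [Finset.ssubset_iff_of_subset]
    · refine ⟨v, ?_, ?_⟩
      · simp only [W, Finset.mem_filter, Finset.mem_univ, true_and]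
        exact ⟨hv, N, Finset.mem_insert_self _ _, by simp [N]⟩
      · simp only [W, Finset.mem_filter, Finset.mem_univ, true_and]
        exact fun h => hun h.2
    · intro u hu
      simp only [W, Finset.mem_filter, Finset.mem_univ, true_and] at hu ⊢
      obtain ⟨hDu, T, hT, huT⟩ := hu
      refine ⟨hDu, ?_⟩
      by_cases hd : Disjoint T N
      · exact ⟨T, Finset.mem_insert_of_mem (Finset.mem_filter.2 ⟨hT, hd⟩), huT⟩
      · refine ⟨N, Finset.mem_insert_self _ _, ?_⟩
        obtain ⟨x, hxT, hxN⟩ := Finset.not_disjoint_iff.1 hd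
        simp only [N, Finset.mem_insert, Finset.mem_singleton] at hxN ⊢
        rcases hxN with rfl | rfl | rfl
        · exact (hun ⟨T, hT, hxT⟩).elim
        · exact Or.inr (key _ _ hva hvb hab T hT hxT u huT hDu)
        · exact Or.inr (key _ _ hvb hva hab.symm T hT hxT u huT hDu).symm
  exact absurd (hmax _ hval) (not_le.2 hlt)

theorem aux_setup {V : Type*} [Fintype V] (G : SimpleGraph V) (D : V → Prop)
    (hd3 : ∀ v a b c, G.Adj v a → G.Adj v b → G.Adj v c → a ≠ b → a ≠ c → b ≠ c → D v)
    (hd4 : ∀ v a b c d, G.Adj v a → G.Adj v b → G.Adj v c → G.Adj v d →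
      a ≠ b → a ≠ c → b ≠ c → d = a ∨ d = b ∨ d = c)
    (hsat : ∀ v a b c, D v → G.Adj v a → G.Adj v b → G.Adj v c →
      a ≠ b → a ≠ c → b ≠ c → D a → D b → D c → False)
    (htri : ∀ v, D v → ∃ a b, G.Adj v a ∧ G.Adj v b ∧ G.Adj a b) :
    ∃ (𝒯 : Finset (Finset V)) (F : SimpleGraph V) (p : 𝒯 → Fin 3 → V) (A : 𝒯 → Prop),
      AuxSetup G F p A := by
  classical
  obtain ⟨𝒯, hcl, hdis, hcov⟩ := aux_family G D hd3 hd4 hsat htri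
  have hq : ∀ T : 𝒯, ∃ q : Fin 3 → V, Function.Injective q ∧ (∀ v, v ∈ T.1 ↔ ∃ k, v = q k) ∧
      ((¬ ∀ v ∈ T.1, D v) → ¬ D (q 2)) := by
    intro T
    have hz : ∃ z ∈ T.1, ((¬ ∀ v ∈ T.1, D v) → ¬ D z) := by
      by_cases h : ∀ v ∈ T.1, D v
      · have : T.1.Nonempty := by
          rw [← Finset.card_pos, (hcl T.1 T.2).1]; norm_num
        obtain ⟨z, hz⟩ := this
        exact ⟨z, hz, fun h' => absurd h h'⟩
      · have h' := h
        push Not at h'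
        obtain ⟨z, hz, hz'⟩ := h'
        exact ⟨z, hz, fun _ => hz'⟩
    obtain ⟨z, hzT, hz⟩ := hz
    have hce : (T.1.erase z).card = 2 := by
      rw [Finset.card_erase_of_mem hzT, (hcl T.1 T.2).1]
    obtain ⟨x, y, hxy, he⟩ := Finset.card_eq_two.1 hce
    have hx : x ∈ T.1.erase z := by rw [he]; simp
    have hy : y ∈ T.1.erase z := by rw [he]; simp
    have hxz := Finset.ne_of_mem_erase hx
    have hyz := Finset.ne_of_mem_erase hy
    refine ⟨![x, y, z], ?_, ?_, hz⟩
    · intro k l hkl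
      fin_cases k <;> fin_cases l <;> simp at hkl ⊢ <;> 
        first | exact absurd hkl hxy | exact absurd hkl hxz | exact absurd hkl hyz | 
          exact absurd hkl.symm hxy | exact absurd hkl.symm hxz | exact absurd hkl.symm hyz
    · intro v
      rw [← Finset.insert_erase hzT, he]
      simp [Fin.exists_fin_succ]
      tauto
  choose q qinj qmem qz using hq
  have qinj2 : ∀ i k j l, q i k = q j l → i = j ∧ k = l := by
    intro i k j l h
    have hij : i = j := Subtype.ext (hdis i.1 i.2 j.1 j.2 (q i k) ((qmem i _).2 ⟨k, rfl⟩)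
      ((qmem j _).2 ⟨l, h⟩))
    subst hij
    exact ⟨rfl, qinj i h⟩
  let F : SimpleGraph V :=
    { Adj := fun u v => G.Adj u v ∧ ¬ ∃ T ∈ 𝒯, u ∈ T ∧ v ∈ T
      symm := ⟨fun u v h => ⟨h.1.symm, fun ⟨T, h1, h2, h3⟩ => h.2 ⟨T, h1, h3, h2⟩⟩⟩
      loopless := ⟨fun u h => h.1.ne rfl⟩ }
  have Fdef : ∀ u v, F.Adj u v ↔ (G.Adj u v ∧ ¬ ∃ T ∈ 𝒯, u ∈ T ∧ v ∈ T) := fun _ _ => Iff.rfl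
  -- a covered vertex has two neighbours inside its triangle
  have two : ∀ T ∈ 𝒯, ∀ v ∈ T, ∃ a ∈ T, ∃ b ∈ T, a ≠ b ∧ G.Adj v a ∧ G.Adj v b := by
    intro T hT v hv
    have hce : (T.erase v).card = 2 := by
      rw [Finset.card_erase_of_mem hv, (hcl T hT).1]
    obtain ⟨x, y, hxy, he⟩ := Finset.card_eq_two.1 hce
    have hx : x ∈ T.erase v := by rw [he]; simp
    have hy : y ∈ T.erase v := by rw [he]; simp
    exact ⟨x, Finset.mem_of_mem_erase hx, y, Finset.mem_of_mem_erase hy, hxy,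
      (hcl T hT).2 v hv x (Finset.mem_of_mem_erase hx) (Finset.ne_of_mem_erase hx).symm,
      (hcl T hT).2 v hv y (Finset.mem_of_mem_erase hy) (Finset.ne_of_mem_erase hy).symm⟩
  have covD : ∀ T ∈ 𝒯, ∀ v ∈ T, ∀ e, F.Adj v e → D v := by
    intro T hT v hv e he
    obtain ⟨a, ha, b, hb, hab, h1, h2⟩ := two T hT v hv
    exact hd3 v a b e h1 h2 he.1 hab (fun h => he.2 ⟨T, hT, hv, h ▸ ha⟩)
      (fun h => he.2 ⟨T, hT, hv, h ▸ hb⟩)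
  have covU : ∀ T ∈ 𝒯, ∀ v ∈ T, ∀ e e', F.Adj v e → F.Adj v e' → e = e' := by
    intro T hT v hv e e' he he'
    obtain ⟨a, ha, b, hb, hab, h1, h2⟩ := two T hT v hv
    rcases hd4 v a b e e' h1 h2 he.1 he'.1 hab (fun h => he.2 ⟨T, hT, hv, h ▸ ha⟩)
      (fun h => he.2 ⟨T, hT, hv, h ▸ hb⟩) with h | h | h
    · exact absurd ⟨T, hT, hv, h ▸ ha⟩ he'.2
    · exact absurd ⟨T, hT, hv, h ▸ hb⟩ he'.2
    · exact h.symm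
  have unc : ∀ v, (¬ ∃ T ∈ 𝒯, v ∈ T) → ∀ a b c, G.Adj v a → G.Adj v b → G.Adj v c →
      a = b ∨ a = c ∨ b = c := by
    intro v hv a b c h1 h2 h3
    by_contra hcon
    push Not at hcon
    exact hv (hcov v (hd3 v a b c h1 h2 h3 hcon.1 hcon.2.1 hcon.2.2))
  have F2 : ∀ v a b c, F.Adj v a → F.Adj v b → F.Adj v c → a = b ∨ a = c ∨ b = c := by
    intro v a b c h1 h2 h3
    by_cases hv : ∃ T ∈ 𝒯, v ∈ T
    · obtain ⟨T, hT, hv⟩ := hv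
      exact Or.inl (covU T hT v hv a b h1 h2)
    · exact unc v hv a b c h1.1 h2.1 h3.1
  -- Hall
  let t : 𝒯 → Finset F.ConnectedComponent := fun T =>
    {F.connectedComponentMk (q T 0), F.connectedComponentMk (q T 1)}
  have hall : ∀ S : Finset 𝒯, S.card ≤ (S.biUnion t).card := by
    intro S
    let R : Finset (𝒯 × Fin 3) := S ×ˢ {0, 1}
    let f : 𝒯 × Fin 3 → F.ConnectedComponent := fun x => F.connectedComponentMk (q x.1 x.2)
    have h1 : R.card ≤ 2 * (S.biUnion t).card := by
      apply Finset.card_le_mul_card_image_of_maps_to (f := f)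
      · rintro ⟨T, k⟩ hx
        simp only [R, Finset.mem_product, Finset.mem_insert, Finset.mem_singleton] at hx
        rw [Finset.mem_biUnion]
        refine ⟨T, hx.1, ?_⟩
        rcases hx.2 with h | h <;> simp [f, t, h]
      · intro C _
        rw [← Finset.card_image_of_injective (f := fun x : 𝒯 × Fin 3 => q x.1 x.2)]
        · apply aux_comp F F2 _ C
          intro v hv
          rw [Finset.mem_image] at hv
          obtain ⟨x, hx, rfl⟩ := hv
          exact ⟨(Finset.mem_filter.1 hx).2,
            covU x.1.1 x.1.2 _ ((qmem x.1 _).2 ⟨x.2, rfl⟩)⟩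
        · rintro ⟨i, k⟩ ⟨j, l⟩ h
          obtain ⟨h1, h2⟩ := qinj2 _ _ _ _ h
          exact Prod.ext h1 h2
    have h2 : R.card = S.card * 2 := by
      rw [Finset.card_product]; rfl
    omega
  obtain ⟨g, ginj, hg⟩ := (Finset.all_card_le_biUnion_card_iff_exists_injective t).1 hall
  have hp : ∀ T : 𝒯, ∃ σ : Equiv.Perm (Fin 3), σ 2 = 2 ∧
      F.connectedComponentMk (q T (σ 0)) = g T := by
    intro T
    have := hg T
    simp only [t, Finset.mem_insert, Finset.mem_singleton] at this
    rcases this with h | h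
    · exact ⟨1, rfl, h.symm⟩
    · exact ⟨Equiv.swap 0 1, by decide, by rw [Equiv.swap_apply_left]; exact h.symm⟩
  choose σ σ2 σ0 using hp
  let p : 𝒯 → Fin 3 → V := fun T k => q T (σ T k)
  have pmem : ∀ T v, v ∈ T.1 ↔ ∃ k, v = p T k := by
    intro T v
    rw [qmem]
    constructor
    · rintro ⟨k, rfl⟩
      exact ⟨(σ T).symm k, by simp [p]⟩
    · rintro ⟨k, rfl⟩
      exact ⟨_, rfl⟩
  have pin : ∀ T k, p T k ∈ T.1 := fun T k => (pmem T _).2 ⟨k, rfl⟩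
  have pinj : ∀ i k j l, p i k = p j l → i = j ∧ k = l := by
    intro i k j l h
    obtain ⟨h1, h2⟩ := qinj2 _ _ _ _ h
    subst h1
    exact ⟨rfl, (σ i).injective h2⟩
  have pord : ∀ v, AuxOrd p v → ¬ ∃ T ∈ 𝒯, v ∈ T := by
    rintro v hv ⟨T, hT, h⟩
    obtain ⟨k, hk⟩ := (pmem ⟨T, hT⟩ v).1 h
    exact hv _ _ hk
  refine ⟨𝒯, F, p, fun T => ¬ ∀ v ∈ T.1, D v, ?_⟩
  constructor
  · exact pinj
  · intro i k l hkl
    exact (hcl i.1 i.2).2 _ (pin i k) _ (pin i l) (fun h => hkl (pinj _ _ _ _ h).2)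
  · exact fun u v h => h.1
  · intro i k w h
    by_cases hT : ∃ T ∈ 𝒯, p i k ∈ T ∧ w ∈ T
    · obtain ⟨T, hT, h1, h2⟩ := hT
      have := hdis i.1 i.2 T hT _ (pin i k) h1
      subst this
      obtain ⟨l, hl⟩ := (pmem i w).1 h2
      refine Or.inr ⟨l, ?_, hl⟩
      rintro rfl
      exact h.ne hl.symm
    · exact Or.inl ⟨h, hT⟩
  · intro v w hv h
    exact ⟨h, fun ⟨T, hT, h1, _⟩ => pord v hv ⟨T, hT, h1⟩⟩
  · intro i k l h
    exact h.2 ⟨i.1, i.2, pin i k, pin i l⟩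
  · intro v hv
    exact unc v (pord v hv)
  · intro i k
    exact covU i.1 i.2 _ (pin i k)
  · intro i e hi he
    have h1 := covD i.1 i.2 _ (pin i 2) e he
    have h2 := qz i hi
    simp only [p, σ2] at h1
    exact h2 h1
  · intro i k e hi he j l hel
    have hi' : ∀ v ∈ i.1, D v := not_not.1 hi
    have hDe : D e := covD j.1 j.2 e (hel ▸ pin j l) _ he.symm
    obtain ⟨a, ha, b, hb, hab, h1, h2⟩ := two i.1 i.2 _ (pin i k)
    exact hsat _ a b e (hi' _ (pin i k)) h1 h2 he.1 hab
      (fun h => he.2 ⟨_, i.2, pin i k, h ▸ ha⟩)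
      (fun h => he.2 ⟨_, i.2, pin i k, h ▸ hb⟩) (hi' a ha) (hi' b hb) hDe
  · intro i j h
    apply ginj
    rw [← σ0 i, ← σ0 j]
    exact SimpleGraph.ConnectedComponent.eq.2 h

/-- Every 2-saturated subcubic graph in which every 3-vertex lies on a triangle
admits a (1,2,2,2)-packing coloring. -/
theorem stmt_11 {V : Type*} [Fintype V] (G : SimpleGraph V) [DecidableRel G.Adj]
    (hsub : Subcubic G) (hsat : Saturated G 2)
    (hgirth : ∀ v : V, G.degree v = 3 → ∃ a b : V, G.Adj v a ∧ G.Adj v b ∧ G.Adj a b) :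
    ∃ c : V → Fin 4, IsPackingColoring G ![1, 2, 2, 2] c := by
  classical
  have card3 : ∀ v a b c, G.Adj v a → G.Adj v b → G.Adj v c → a ≠ b → a ≠ c → b ≠ c →
      G.degree v = 3 ∧ G.neighborFinset v = {a, b, c} := by
    intro v a b c h1 h2 h3 h4 h5 h6
    have hc : ({a, b, c} : Finset V).card = 3 := Finset.card_eq_three.2 ⟨a, b, c, h4, h5, h6, rfl⟩
    have hss : ({a, b, c} : Finset V) ⊆ G.neighborFinset v := by
      intro x hx
      simp only [Finset.mem_insert, Finset.mem_singleton] at hx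
      rw [SimpleGraph.mem_neighborFinset]
      rcases hx with rfl | rfl | rfl <;> assumption
    have hv := hsub v
    have hle := Finset.card_le_card hss
    rw [SimpleGraph.card_neighborFinset_eq_degree] at hle
    refine ⟨by omega, (Finset.eq_of_subset_of_card_le hss ?_).symm⟩
    rw [SimpleGraph.card_neighborFinset_eq_degree]
    omega
  obtain ⟨𝒯, F, p, A, hs⟩ := aux_setup G (fun v => G.degree v = 3)
    (fun v a b c h1 h2 h3 h4 h5 h6 => (card3 v a b c h1 h2 h3 h4 h5 h6).1)
    (by
      intro v a b c d h1 h2 h3 hd h4 h5 h6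
      have := (card3 v a b c h1 h2 h3 h4 h5 h6).2
      have hd' : d ∈ G.neighborFinset v := by rwa [SimpleGraph.mem_neighborFinset]
      rw [this] at hd'
      simpa using hd')
    (by
      intro v a b c hv h1 h2 h3 h4 h5 h6 ha hb hc
      have hn := (card3 v a b c h1 h2 h3 h4 h5 h6).2
      have := hsat v hv
      rw [hn, Finset.filter_true_of_mem, Finset.card_eq_three.2 ⟨a, b, c, h4, h5, h6, rfl⟩] at this
      · omega
      · intro x hx
        simp only [Finset.mem_insert, Finset.mem_singleton] at hx
        rcases hx with rfl | rfl | rfl <;> assumption)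
    hgirth
  obtain ⟨I, c, hI, hc⟩ := aux_phase2 hs
  refine ⟨fun v => if v ∈ I then 0 else (c v).succ, ?_⟩
  intro u v huv hcol hr
  have hd0 : 0 < G.dist u v := hr.pos_dist_of_ne huv
  by_cases hu : u ∈ I
  · have hv : v ∈ I := by
      by_contra hv
      simp only [hu, hv, if_true, if_false] at hcol
      exact (Fin.succ_ne_zero _) hcol.symm
    simp only [hu, if_true]
    have : G.dist u v ≠ 1 := fun h => hI u hu v hv (SimpleGraph.dist_eq_one_iff_adj.1 h)
    show 1 < G.dist u v
    omega
  · have hv : v ∉ I := by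
      intro hv
      simp only [hu, hv, if_true, if_false] at hcol
      exact (Fin.succ_ne_zero _) hcol
    simp only [hu, hv, if_false] at hcol ⊢
    have hcuv := Fin.succ_injective _ hcol
    have h2 : (![1, 2, 2, 2] : Fin 4 → ℕ) (c u).succ = 2 := by
      generalize c u = x
      fin_cases x <;> rfl
    rw [h2]
    by_contra hle
    refine hc u v ⟨huv, hu, hv, ?_⟩ hcuv
    obtain ⟨w, hw⟩ := hr.exists_walk_length_eq_dist
    cases w with
    | nil => exact absurd rfl huv
    | cons h1 w =>
      cases w with
      | nil => exact Or.inl h1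
      | cons h2 w =>
        cases w with
        | nil => exact Or.inr ⟨_, h1, h2⟩
        | cons h3 w =>
          simp only [SimpleGraph.Walk.length_cons] at hw
          omega
end

section
/- Every 1-saturated subcubic graph in which every 3-vertex lies on a cycle of length at most 4 admits a (1,2,2,2)-packing coloring. -/
open SimpleGraph

theorem ext_col {V : Type*} (H : V → V → Prop) (hsymm : ∀ u v, H u v → H v u)
    (hirr : ∀ u, ¬ H u u) (B : Set V) (c0 : V → Fin 3)
    (h0 : ∀ u ∈ B, ∀ v ∈ B, H u v → c0 u ≠ c0 v) (S : Finset V)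
    (hS : ∀ v ∈ S, ∃ a b, ∀ u, H v u → u = a ∨ u = b) :
    ∃ c : V → Fin 3, ∀ u v, (u ∈ B ∨ u ∈ S) → (v ∈ B ∨ v ∈ S) → H u v → c u ≠ c v := by
  classical
  induction S using Finset.induction_on with
  | empty => exact ⟨c0, by simpa using fun u v hu hv => h0 u hu v hv⟩
  | insert s S hs ih =>
    obtain ⟨c, hc⟩ := ih (fun v hv => hS v (Finset.mem_insert_of_mem hv))
    by_cases hsB : s ∈ B
    · refine ⟨c, fun u v hu hv => hc u v ?_ ?_⟩ <;> grind
    · obtain ⟨a, b, hab⟩ := hS s (Finset.mem_insert_self _ _)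
      have key : ∀ i j : Fin 3, ∃ k, k ≠ i ∧ k ≠ j := by decide
      obtain ⟨k, hk1, hk2⟩ := key (c a) (c b)
      refine ⟨Function.update c s k, fun u v hu hv huv => ?_⟩
      by_cases h1 : u = s
      · subst h1
        have hne : v ≠ u := fun h => hirr u (h ▸ huv)
        rw [Function.update_self, Function.update_of_ne hne]
        rcases hab v huv with h | h <;> rw [h] <;> assumption
      · by_cases h2 : v = s
        · subst h2
          rw [Function.update_self, Function.update_of_ne h1]
          rcases hab u (hsymm _ _ huv) with h | h <;> rw [h] <;> exact Ne.symm (by assumption)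
        · rw [Function.update_of_ne h1, Function.update_of_ne h2]
          exact hc u v (by grind) (by grind) huv

theorem choose_ends {ι κ : Type*} [Finite ι] (f : ι → Bool → κ)
    (hf : ∀ k : κ, ∀ i j l : ι × Bool, f i.1 i.2 = k → f j.1 j.2 = k → f l.1 l.2 = k →
      i = j ∨ i = l ∨ j = l) :
    ∃ b : ι → Bool, Function.Injective (fun i => f i (b i)) := by
  classical
  have := (Finset.all_card_le_biUnion_card_iff_exists_injective
    (fun i => ({f i true, f i false} : Finset κ))).1 ?_
  · obtain ⟨g, hg, hg2⟩ := this
    have : ∀ i, ∃ b, f i b = g i := by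
      intro i
      have := hg2 i
      simp only [Finset.mem_insert, Finset.mem_singleton] at this
      rcases this with h | h
      · exact ⟨_, h.symm⟩
      · exact ⟨_, h.symm⟩
    choose b hb using this
    exact ⟨b, by simpa [hb] using hg⟩
  · intro A
    have h := Finset.card_le_mul_card_image_of_maps_to
      (s := A ×ˢ (Finset.univ : Finset Bool))
      (t := A.biUnion (fun i => ({f i true, f i false} : Finset κ)))
      (f := fun p => f p.1 p.2) ?_ 2 ?_
    · simp at h
      omega
    · rintro ⟨i, b⟩ hi
      simp only [Finset.mem_product] at hi
      simp only [Finset.mem_biUnion]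
      refine ⟨i, hi.1, ?_⟩
      cases b <;> simp
    · intro k _
      by_contra hcon
      push Not at hcon
      obtain ⟨x, y, z, hx, hy, hz, h1, h2, h3⟩ := Finset.two_lt_card_iff.1 hcon
      simp only [Finset.mem_filter] at hx hy hz
      have := hf k x y z hx.2 hy.2 hz.2
      tauto

theorem max_indep {V : Type*} [Finite V] (G : SimpleGraph V) (S U : Set V) (hSU : S ⊆ U)
    (hS : ∀ u ∈ S, ∀ v ∈ S, ¬ G.Adj u v) :
    ∃ I : Set V, S ⊆ I ∧ I ⊆ U ∧ (∀ u ∈ I, ∀ v ∈ I, ¬ G.Adj u v) ∧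
      ∀ v ∈ U, v ∉ I → ∃ w ∈ I, G.Adj v w := by
  have hfin : {I : Set V | S ⊆ I ∧ I ⊆ U ∧ ∀ u ∈ I, ∀ v ∈ I, ¬ G.Adj u v}.Finite :=
    Set.toFinite _
  obtain ⟨I, hI⟩ := hfin.exists_maximal ⟨S, subset_rfl, hSU, hS⟩
  obtain ⟨⟨h1, h2, h3⟩, hmax⟩ := hI
  refine ⟨I, h1, h2, h3, fun v hv hvI => ?_⟩
  by_contra hcon
  push Not at hcon
  apply hvI
  have : insert v I ⊆ I := by
    apply hmax
    · refine ⟨h1.trans (Set.subset_insert _ _), Set.insert_subset hv h2, ?_⟩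
      intro a ha b hb hab
      rcases ha with rfl | ha <;> rcases hb with rfl | hb
      · exact G.irrefl hab
      · exact hcon b hb hab
      · exact hcon a ha hab.symm
      · exact h3 a ha b hb hab
    · exact Set.subset_insert _ _
  exact this (Set.mem_insert _ _)

/-- Twin vertices attached to a 3-vertex. -/
def Wt {V : Type*} (G : SimpleGraph V) (T : V → Prop) (a : V) : Prop :=
  ¬ T a ∧ (∃ x, G.Adj a x ∧ T x) ∧ ∃ c, c ≠ a ∧ ∀ w, G.Adj c w ↔ G.Adj a w

def Tri {V : Type*} (G : SimpleGraph V) (T : V → Prop) (y x z : V) : Prop :=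
  ¬ T y ∧ ¬ Wt G T y ∧ G.Adj y x ∧ G.Adj y z ∧ G.Adj x z ∧ T x

def Sq {V : Type*} (G : SimpleGraph V) (T : V → Prop) (y x x' y' : V) : Prop :=
  ¬ T y ∧ ¬ Wt G T y ∧ G.Adj y x ∧ G.Adj x x' ∧ G.Adj x' y' ∧ G.Adj y' y ∧ T x ∧ T x' ∧
    ¬ T y' ∧ y ≠ x' ∧ x ≠ y' ∧ ∀ w, G.Adj x w → ¬ G.Adj x' w

structure Hyp {V : Type*} (G : SimpleGraph V) (T : V → Prop) : Prop where
  h2 : ∀ v a b c, ¬ T v → G.Adj v a → G.Adj v b → G.Adj v c → a = b ∨ a = c ∨ b = c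
  h3 : ∀ v a b c d, G.Adj v a → G.Adj v b → G.Adj v c → G.Adj v d →
    a = b ∨ a = c ∨ a = d ∨ b = c ∨ b = d ∨ c = d
  h3e : ∀ v a b, T v → ∃ p, G.Adj v p ∧ p ≠ a ∧ p ≠ b
  hT : ∀ u v, (∀ w, G.Adj u w ↔ G.Adj v w) → T u → T v
  hs : ∀ v a b, T v → G.Adj v a → G.Adj v b → T a → T b → a = b
  hc : ∀ v, T v → (∃ a b, G.Adj v a ∧ G.Adj a b ∧ G.Adj b v) ∨
    ∃ a b c, G.Adj v a ∧ G.Adj a b ∧ G.Adj b c ∧ G.Adj c v ∧ a ≠ c ∧ v ≠ b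

theorem ends_exist {V : Type*} [Finite V] (G : SimpleGraph V) (T : V → Prop) (h : Hyp G T) :
    ∃ P : Set V, (∀ p ∈ P, ¬ T p ∧ ∃ y x z, Tri G T y x z ∧ T z ∧ G.Adj x p ∧ p ≠ y ∧ p ≠ z) ∧
      (∀ u ∈ P, ∀ v ∈ P, ¬ G.Adj u v) ∧
      ∀ y x z p q, Tri G T y x z → T z → G.Adj x p → p ≠ y → p ≠ z → G.Adj z q → q ≠ y →
        q ≠ x → p ∈ P ∨ q ∈ P := by
  classical
  have hE : ∀ i : {y // ∃ x z, Tri G T y x z ∧ T z}, ∃ X E : Bool → V, ∀ b,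
      Tri G T i.1 (X b) (X !b) ∧ T (X !b) ∧ G.Adj (X b) (E b) ∧ E b ≠ i.1 ∧ E b ≠ X !b := by
    rintro ⟨y, x, z, hy, hz⟩
    obtain ⟨p, hp⟩ := h.h3e x y z hy.2.2.2.2.2
    obtain ⟨q, hq⟩ := h.h3e z y x hz
    refine ⟨fun b => if b then x else z, fun b => if b then p else q, ?_⟩
    obtain ⟨a1, a2, a3, a4, a5, a6⟩ := hy
    intro b
    cases b
    · simp [Tri, *, a5.symm]
    · simpa [Tri, *] using a5
  choose X E hXE using hE
  have hnT : ∀ i b, ¬ T (E i b) := by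
    intro i b hT
    obtain ⟨⟨a1, a2, a3, a4, a5, a6⟩, a7, a8, a9, a10⟩ := hXE i b
    exact a10 (h.hs _ _ _ a6 a8 a5 hT a7)
  have hXT : ∀ i b, T (X i b) := fun i b => (hXE i b).1.2.2.2.2.2
  have hEX : ∀ i b, G.Adj (E i b) (X i b) := fun i b => (hXE i b).2.2.1.symm
  have hEX2 : ∀ i b, E i b ≠ X i b := fun i b => (hEX i b).ne
  let cls : {y // ∃ x z, Tri G T y x z ∧ T z} → Bool → Set V :=
    fun i b => {w | (w = E i b ∨ G.Adj (E i b) w) ∧ w ≠ X i b}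
  have hself : ∀ i b, E i b ∈ cls i b := fun i b => ⟨Or.inl rfl, hEX2 i b⟩
  have huniq : ∀ i j : {y // ∃ x z, Tri G T y x z ∧ T z} × Bool,
      cls i.1 i.2 = cls j.1 j.2 → E i.1 i.2 = E j.1 j.2 → i = j := by
    rintro ⟨i, b⟩ ⟨j, b'⟩ hcls hEE
    simp only at hcls hEE
    have hX : X i b = X j b' := by
      by_contra hne
      have h1 : X j b' ∈ cls i b := ⟨Or.inr (hEE ▸ hEX j b'), fun h => hne h.symm⟩
      rw [hcls] at h1
      exact h1.2 rfl
    obtain ⟨⟨a1, a2, a3, a4, a5, a6⟩, a7, a8, a9, a10⟩ := hXE i b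
    obtain ⟨⟨b1, b2, b3, b4, b5, b6⟩, b7, b8, b9, b10⟩ := hXE j b'
    have hX' : X i (!b) = X j (!b') := h.hs _ _ _ a6 a5 (hX ▸ b5) a7 b7
    have hij : i = j := by
      apply Subtype.ext
      have := h.h3 (X i b) i.1 j.1 (X i (!b)) (E i b) a3.symm (hX ▸ b3.symm) a5 a8
      have e1 := a4.ne
      have e2 := b4.ne
      grind
    subst hij
    have : b = b' := by
      by_contra hbb
      have : (!b) = b' := by cases b <;> cases b' <;> simp_all
      rw [this, ← hX] at a5
      exact G.irrefl a5
    rw [this]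
  obtain ⟨b, hb⟩ := choose_ends cls (by
    intro k i j l hi hj hl
    have h1 : E j.1 j.2 ∈ cls i.1 i.2 := by rw [hi, ← hj]; exact hself _ _
    have h2 : E l.1 l.2 ∈ cls i.1 i.2 := by rw [hi, ← hl]; exact hself _ _
    have : E i.1 i.2 = E j.1 j.2 ∨ E i.1 i.2 = E l.1 l.2 ∨ E j.1 j.2 = E l.1 l.2 := by
      rcases h1.1 with h3 | h3
      · exact Or.inl h3.symm
      rcases h2.1 with h4 | h4
      · exact Or.inr (Or.inl h4.symm)
      have := h.h2 _ _ _ _ (hnT i.1 i.2) h3 h4 (hEX i.1 i.2)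
      have h5 := h1.2
      have h6 := h2.2
      tauto
    rcases this with h | h | h
    · exact Or.inl (huniq _ _ (hi.trans hj.symm) h)
    · exact Or.inr (Or.inl (huniq _ _ (hi.trans hl.symm) h))
    · exact Or.inr (Or.inr (huniq _ _ (hj.trans hl.symm) h)))
  have hcls2 : ∀ i b w, G.Adj (E i b) w → ¬ T w → cls i b = {E i b, w} := by
    intro i b w hw hTw
    have hwX : w ≠ X i b := fun h => hTw (h ▸ hXT i b)
    ext v
    simp only [cls, Set.mem_ofPred_eq, Set.mem_insert_iff, Set.mem_singleton_iff]
    constructor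
    · rintro ⟨h1 | h1, h2⟩
      · exact Or.inl h1
      · have := h.h2 _ _ _ _ (hnT i b) h1 hw (hEX i b)
        tauto
    · rintro (rfl | rfl)
      · exact ⟨Or.inl rfl, hEX2 i b⟩
      · exact ⟨Or.inr hw, hwX⟩
  refine ⟨Set.range (fun i => E i (b i)), ?_, ?_, ?_⟩
  · rintro _ ⟨i, rfl⟩
    obtain ⟨a1, a7, a8, a9, a10⟩ := hXE i (b i)
    exact ⟨hnT _ _, _, _, _, a1, a7, a8, a9, a10⟩
  · rintro _ ⟨i, rfl⟩ _ ⟨j, rfl⟩ hadj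
    simp only at hadj
    have h1 := hcls2 i (b i) _ hadj (hnT _ _)
    have h2 := hcls2 j (b j) _ hadj.symm (hnT _ _)
    have : i = j := hb (by simp only; rw [h1, h2, Set.pair_comm])
    subst this
    exact G.irrefl hadj
  · intro y x z p q hy hz hp hpy hpz hq hqy hqx
    let i : {y // ∃ x z, Tri G T y x z ∧ T z} := ⟨y, x, z, hy, hz⟩
    have hm : E i (b i) ∈ Set.range (fun i => E i (b i)) := ⟨i, rfl⟩
    obtain ⟨⟨a1, a2, a3, a4, a5, a6⟩, a7, a8, a9, a10⟩ := hXE i (b i)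
    obtain ⟨c1, c2, c3, c4, c5, c6⟩ := hy
    have hi : i.1 = y := rfl
    rw [hi] at a3 a4 a9
    have e5 := a5.ne
    have f5 := c5.ne
    have k1 := h.h2 y x z (X i (b i)) c1 c3 c4 a3
    have k2 := h.h2 y x z (X i (!b i)) c1 c3 c4 a4
    have g1 := c4.ne
    have g2 := c3.ne
    rcases k1 with k1 | k1 | k1
    · exact absurd k1 f5
    · left
      have : X i (!b i) = z := by grind
      rw [← k1] at a8
      have := h.h3 x y z p (E i (b i)) c3.symm c5 hp a8
      have : p = E i (b i) := by grind
      rwa [this]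
    · right
      have : X i (!b i) = x := by grind
      rw [← k1] at a8
      have := h.h3 z y x q (E i (b i)) c4.symm c5.symm hq a8
      have : q = E i (b i) := by grind
      rwa [this]

theorem Wt.twin {V : Type*} {G : SimpleGraph V} {T : V → Prop} (h : Hyp G T) {a c : V}
    (ha : Wt G T a) (hc : ∀ w, G.Adj c w ↔ G.Adj a w) : Wt G T c := by
  obtain ⟨h1, ⟨x, h2, h2'⟩, d, h3, h4⟩ := ha
  refine ⟨fun ht => h1 (h.hT _ _ hc ht), ⟨x, (hc x).2 h2, h2'⟩, ?_⟩
  by_cases hca : c = a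
  · subst hca; exact ⟨d, h3, h4⟩
  · exact ⟨a, fun h => hca h.symm, fun w => (hc w).symm⟩

/-- Removed vertices. -/
def Rm {V : Type*} (G : SimpleGraph V) (T : V → Prop) (rep : V → V) (r : V) : Prop :=
  (Wt G T r ∧ r ≠ rep r) ∨ (∃ x z, Tri G T r x z) ∨ ∃ x x' y', Sq G T r x x' y'

theorem Rm.notT {V : Type*} {G : SimpleGraph V} {T : V → Prop} {rep : V → V} {r : V}
    (hr : Rm G T rep r) : ¬ T r := by
  rcases hr with h | ⟨_, _, h⟩ | ⟨_, _, _, h⟩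
  · exact h.1.1
  · exact h.1
  · exact h.1

theorem exists_rm {V : Type*} {G : SimpleGraph V} {T : V → Prop} (h : Hyp G T) (rep : V → V)
    (hrep2 : ∀ a b, (∀ w, G.Adj a w ↔ G.Adj b w) → rep a = rep b)
    (v : V) (hv : T v) : ∃ r, G.Adj v r ∧ Rm G T rep r := by
  have hW : ∀ a, G.Adj v a → Wt G T a → ∃ r, G.Adj v r ∧ Rm G T rep r := by
    intro a hva ha
    by_cases hra : a = rep a
    · obtain ⟨h1, h2, c, h3, h4⟩ := id ha
      refine ⟨c, ((h4 v).2 hva.symm).symm, Or.inl ⟨ha.twin h h4, ?_⟩⟩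
      rw [hrep2 c a h4, ← hra]
      exact h3
    · exact ⟨a, hva, Or.inl ⟨ha, hra⟩⟩
  have hTri : ∀ a b, G.Adj v a → G.Adj a b → G.Adj b v → ¬ T b →
      ∃ r, G.Adj v r ∧ Rm G T rep r := by
    intro a b h1 h2 h3 h4
    by_cases hWb : Wt G T b
    · exact hW b h3.symm hWb
    · exact ⟨b, h3.symm, Or.inr (Or.inl ⟨v, a, h4, hWb, h3, h2.symm, h1, hv⟩)⟩
  rcases h.hc v hv with ⟨a, b, h1, h2, h3⟩ | ⟨a, b, c, h1, h2, h3, h4, h5, h6⟩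
  · by_cases hb : T b
    · refine hTri b a h3.symm h2.symm h1.symm fun ha => ?_
      exact h2.ne (h.hs v a b hv h1 h3.symm ha hb)
    · exact hTri a b h1 h2 h3 hb
  · have key : ∀ a c, G.Adj v a → G.Adj a b → G.Adj b c → G.Adj c v → a ≠ c → T a →
        ∃ r, G.Adj v r ∧ Rm G T rep r := by
      intro a c h1 h2 h3 h4 h5 ha
      have hb : ¬ T b := fun hb => h6 (h.hs a v b ha h1.symm h2 hv hb)
      have hc : ¬ T c := fun hc => h5 (h.hs v a c hv h1 h4.symm ha hc)
      by_cases hw : ∃ w, G.Adj v w ∧ G.Adj a w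
      · obtain ⟨w, hw1, hw2⟩ := hw
        refine hTri a w h1 hw2 hw1.symm fun hw => ?_
        exact hw2.ne (h.hs v a w hv h1 hw1 ha hw)
      · by_cases hWc : Wt G T c
        · exact hW c h4.symm hWc
        · push Not at hw
          exact ⟨c, h4.symm, Or.inr (Or.inr ⟨v, a, b, hc, hWc, h4, h1, h2, h3, hv, ha, hb,
            h5.symm, h6, hw⟩)⟩
    by_cases ha : T a
    · exact key a c h1 h2 h3 h4 h5 ha
    by_cases hc : T c
    · exact key c a h4.symm h3.symm h2.symm h1.symm h5.symm hc
    refine hW a h1 ⟨ha, ⟨v, h1.symm, hv⟩, c, h5.symm, fun w => ⟨fun hw => ?_, fun hw => ?_⟩⟩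
    · rcases h.h2 c v b w hc h4 h3.symm hw with h | h | h
      · exact absurd h h6
      · exact h ▸ h1.symm
      · exact h ▸ h2
    · rcases h.h2 a v b w ha h1.symm h2 hw with h | h | h
      · exact absurd h h6
      · exact h ▸ h4
      · exact h ▸ h3.symm

theorem end_not_wt {V : Type*} {G : SimpleGraph V} {T : V → Prop} (h : Hyp G T)
    {p x y z : V} (hp : ¬ T p) (ht : Tri G T y x z) (hz : T z) (hxp : G.Adj x p) (hpy : p ≠ y)
    (hpz : p ≠ z) : ¬ Wt G T p := by
  rintro ⟨_, _, c, h3, h4⟩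
  obtain ⟨c1, c2, c3, c4, c5, c6⟩ := ht
  have hcx : G.Adj c x := (h4 x).2 hxp.symm
  have hcT : ¬ T c := fun hc => hp (h.hT _ _ h4 hc)
  have := h.h3 x y z p c c3.symm c5 hxp hcx.symm
  have h5 := c4.ne
  have hcy : c = y := by grind
  subst hcy
  exact c2 ⟨c1, ⟨x, c3, c6⟩, p, hpy, fun w => (h4 w).symm⟩

theorem end_not_rm {V : Type*} {G : SimpleGraph V} {T : V → Prop} (h : Hyp G T) (rep : V → V)
    {p x y z : V} (hp : ¬ T p) (ht : Tri G T y x z) (hz : T z) (hxp : G.Adj x p) (hpy : p ≠ y)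
    (hpz : p ≠ z) : ¬ Rm G T rep p := by
  have hnw := end_not_wt h hp ht hz hxp hpy hpz
  obtain ⟨c1, c2, c3, c4, c5, c6⟩ := ht
  have h5 := c4.ne
  have h6 := c3.ne
  have h7 := c5.ne
  have hpy' : ¬ G.Adj p y := fun hh => by
    have := h.h2 y x z p c1 c3 c4 hh.symm
    have := hxp.ne
    grind
  have hpz' : ¬ G.Adj p z := by
    intro hh
    refine c2 ⟨c1, ⟨x, c3, c6⟩, p, hpy, fun w => ⟨fun hw => ?_, fun hw => ?_⟩⟩
    · have := h.h2 p x z w hp hxp.symm hh hw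
      grind
    · have := h.h2 y x z w c1 c3 c4 hw
      have := hxp.symm
      grind
  have aux : ∀ v, G.Adj x v → G.Adj p v → False := by
    intro v hv1 hv2
    have := h.h3 x y z p v c3.symm c5 hxp hv1
    have := hv2.ne
    grind
  rintro (h1 | ⟨u, v, h1⟩ | ⟨u, u', v, h1⟩)
  · exact hnw h1.1
  · obtain ⟨d1, d2, d3, d4, d5, d6⟩ := h1
    rcases h.h2 p u v x hp d3 d4 hxp.symm with e | e | e
    · exact d5.ne e
    · subst e; exact aux _ d5 d4
    · subst e; exact aux _ d5.symm d3
  · obtain ⟨d1, d2, d3, d4, d5, d6, d7, d8, d9, d10, d11, d12⟩ := h1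
    rcases h.h2 p u v x hp d3 d6.symm hxp.symm with e | e | e
    · exact d11 e
    · subst e
      have := h.hs u u' z d7 d4 c5 d8 hz
      subst this
      exact d12 y c3.symm c4.symm
    · subst e; exact d9 c6

set_option maxHeartbeats 4000000 in
theorem core {V : Type*} [Finite V] (G : SimpleGraph V) (T : V → Prop) (h : Hyp G T) :
    ∃ c : V → Fin 4, (∀ u v, G.Adj u v → c u ≠ c v) ∧
      ∀ u w v, G.Adj u w → G.Adj w v → u ≠ v → c u = c v → c u = 0 := by
  classical
  obtain ⟨rep, hrep, hrep2⟩ : ∃ rep : V → V, (∀ a w, G.Adj (rep a) w ↔ G.Adj a w) ∧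
      ∀ a b, (∀ w, G.Adj a w ↔ G.Adj b w) → rep a = rep b := by
    refine ⟨fun a => @Function.invFun _ _ ⟨a⟩ G.Adj (G.Adj a), fun a w => ?_, fun a b hab => ?_⟩
    · have := @Function.invFun_eq _ _ ⟨a⟩ G.Adj (G.Adj a) ⟨a, rfl⟩
      rw [this]
    · have : G.Adj a = G.Adj b := by ext w; exact hab w
      simp only [this]
  have hrr : ∀ a, rep (rep a) = rep a := fun a => hrep2 _ _ (hrep a)
  obtain ⟨P, hP1, hP2, hP3⟩ := ends_exist G T h
  let R : Set V := {r | Rm G T rep r}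
  let M : Set V := {a | Wt G T a ∧ a = rep a}
  have hMnb : ∀ a ∈ M, ∀ p, ¬ T p → G.Adj a p → ∀ x, T x → ¬ G.Adj p x := by
    rintro a ⟨⟨h1, h2, c, h3, h4⟩, -⟩ p hp hap x hx hpx
    have hcp := (h4 p).2 hap
    have hcT : ¬ T c := fun hc => h1 (h.hT _ _ h4 hc)
    have := h.h2 p a c x hp hap.symm hcp.symm hpx
    grind
  have hI0 : ∀ u ∈ M ∪ P, ∀ v ∈ M ∪ P, ¬ G.Adj u v := by
    have hMM : ∀ u ∈ M, ∀ v ∈ M, ¬ G.Adj u v := by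
      intro u hu v hv huv
      obtain ⟨h1, ⟨x, h2, h2'⟩, h3⟩ := hv.1
      exact hMnb u hu v h1 huv x h2' h2
    have hMP : ∀ u ∈ M, ∀ v ∈ P, ¬ G.Adj u v := by
      intro u hu v hv huv
      obtain ⟨h1, y, x, z, ht, hz, hx, _⟩ := hP1 v hv
      exact hMnb u hu v h1 huv x ht.2.2.2.2.2 hx.symm
    rintro u (hu | hu) v (hv | hv) huv
    · exact hMM u hu v hv huv
    · exact hMP u hu v hv huv
    · exact hMP v hv u hu huv.symm
    · exact hP2 u hu v hv huv
  have hI0R : M ∪ P ⊆ Rᶜ := by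
    rintro u (hu | hu) hR
    · rcases hR with h1 | ⟨_, _, h1⟩ | ⟨_, _, _, h1⟩
      · exact h1.2 hu.2
      · exact h1.2.1 hu.1
      · exact h1.2.1 hu.1
    · obtain ⟨h1, y, x, z, ht, hz, hx, hy', hz'⟩ := hP1 u hu
      exact end_not_rm h rep h1 ht hz hx hy' hz' hR
  obtain ⟨I1, hI1a, hI1b, hI1c, hI1d⟩ := max_indep G (M ∪ P) Rᶜ hI0R hI0
  obtain ⟨I, hIa, -, hIc, hId⟩ := max_indep G I1 Set.univ (Set.subset_univ _) hI1c
  have hId : ∀ v, v ∉ I → ∃ w ∈ I, G.Adj v w := fun v => hId v trivial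
  have hII1 : ∀ v, v ∉ R → v ∈ I → v ∈ I1 := by
    intro v hv hvI
    by_contra hcon
    obtain ⟨w, hw, hvw⟩ := hI1d v hv hcon
    exact hIc v hvI w (hIa hw) hvw
  have hnR : ∀ v, v ∉ R → v ∉ I → ∃ w, w ∈ I ∧ w ∉ R ∧ G.Adj v w := by
    intro v hv hvI
    obtain ⟨w, hw, hvw⟩ := hI1d v hv (fun hh => hvI (hIa hh))
    exact ⟨w, hIa hw, hI1b hw, hvw⟩
  have hMI : ∀ a ∈ M, a ∈ I := fun a ha => hIa (hI1a (Or.inl ha))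
  have hPI : ∀ a ∈ P, a ∈ I := fun a ha => hIa (hI1a (Or.inr ha))
  have hTR : ∀ v, T v → v ∉ R := fun v hv hR => Rm.notT hR hv
  -- removed vertices keep at most two conflicts
  let H : V → V → Prop := fun u v => u ≠ v ∧ u ∉ I ∧ v ∉ I ∧
    (G.Adj u v ∨ ∃ w, G.Adj u w ∧ G.Adj w v)
  have hD : ∀ v ∈ R, v ∉ I → ∃ a b, ∀ u, H v u → u = a ∨ u = b := by
    intro y hyR hyI
    obtain ⟨m, hmI, hym⟩ := hId y hyI
    rcases hyR with h1 | ⟨x, z, h1⟩ | ⟨x, x', y', h1⟩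
    · exfalso
      have h2 : rep y ∈ M := ⟨h1.1.twin h (hrep y), (hrr y).symm⟩
      exact hIc _ (hMI _ h2) m hmI ((hrep y m).2 hym)
    · have htri := h1
      obtain ⟨c1, c2, c3, c4, c5, c6⟩ := h1
      have e3 := c3.ne
      have e4 := c4.ne
      have e5 := c5.ne
      have hm := h.h2 y x z m c1 c3 c4 hym
      obtain ⟨p, hp, hpy, hpz⟩ := h.h3e x y z c6
      have hNx : ∀ w, G.Adj x w → w = y ∨ w = z ∨ w = p := by
        intro w hw
        have := h.h3 x y z p w c3.symm c5 hp hw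
        grind
      have hNy : ∀ w, G.Adj y w → w = x ∨ w = z := by
        intro w hw
        have := h.h2 y x z w c1 c3 c4 hw
        grind
      by_cases hz : T z
      · obtain ⟨q, hq, hqy, hqx⟩ := h.h3e z y x hz
        have hNz : ∀ w, G.Adj z w → w = y ∨ w = x ∨ w = q := by
          intro w hw
          have := h.h3 z y x q w c4.symm c5.symm hq hw
          grind
        have hH : ∀ u, H y u → u ∉ I ∧ (u = x ∨ u = z ∨ u = p ∨ u = q) := by
          rintro u ⟨hu1, hu2, hu3, hu4 | ⟨w, hw1, hw2⟩⟩
          · have := hNy u hu4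
            grind
          · rcases hNy w hw1 with rfl | rfl
            · have := hNx u hw2
              grind
            · have := hNz u hw2
              grind
        have hpq := hP3 y x z p q htri hz hp hpy hpz hq hqy hqx
        have hpq : p ∈ I ∨ q ∈ I := hpq.imp (hPI _) (hPI _)
        have hxz : x ∈ I ∨ z ∈ I := by grind
        rcases hpq with h1 | h1 <;> rcases hxz with h2 | h2
        · exact ⟨z, q, fun u hu => by grind⟩
        · exact ⟨x, q, fun u hu => by grind⟩
        · exact ⟨z, p, fun u hu => by grind⟩
        · exact ⟨x, p, fun u hu => by grind⟩
      · have hNz : ∀ w, G.Adj z w → w = y ∨ w = x := by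
          intro w hw
          have := h.h2 z y x w hz c4.symm c5.symm hw
          grind
        have hH : ∀ u, H y u → u ∉ I ∧ (u = x ∨ u = z ∨ u = p) := by
          rintro u ⟨hu1, hu2, hu3, hu4 | ⟨w, hw1, hw2⟩⟩
          · have := hNy u hu4
            grind
          · rcases hNy w hw1 with rfl | rfl
            · have := hNx u hw2
              grind
            · have := hNz u hw2
              grind
        have hxz : x ∈ I ∨ z ∈ I := by grind
        rcases hxz with h2 | h2
        · exact ⟨z, p, fun u hu => by grind⟩
        · exact ⟨x, p, fun u hu => by grind⟩
    · have hyR : y ∈ R := Or.inr (Or.inr ⟨_, _, _, h1⟩)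
      obtain ⟨d1, d2, d3, d4, d5, d6, d7, d8, d9, d10, d11, d12⟩ := h1
      have e3 := d3.ne
      have e4 := d4.ne
      have e5 := d5.ne
      have e6 := d6.ne
      obtain ⟨p, hp, hpy, hpz⟩ := h.h3e x y x' d7
      have hNx : ∀ w, G.Adj x w → w = y ∨ w = x' ∨ w = p := by
        intro w hw
        have := h.h3 x y x' p w d3.symm d4 hp hw
        grind
      have hNy : ∀ w, G.Adj y w → w = x ∨ w = y' := by
        intro w hw
        have := h.h2 y x y' w d1 d3 d6.symm hw
        grind
      have hNy' : ∀ w, G.Adj y' w → w = y ∨ w = x' := by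
        intro w hw
        have := h.h2 y' y x' w d9 d6 d5.symm hw
        grind
      have hH : ∀ u, H y u → u ∉ I ∧ (u = x ∨ u = y' ∨ u = p ∨ u = x') := by
        rintro u ⟨hu1, hu2, hu3, hu4 | ⟨w, hw1, hw2⟩⟩
        · have := hNy u hu4
          grind
        · rcases hNy w hw1 with rfl | rfl
          · have := hNx u hw2
            grind
          · have := hNy' u hw2
            grind
      by_cases hxI : x ∈ I
      · have hx' : x' ∉ I := fun hh => hIc _ hxI _ hh d4
        have hy' : y' ∈ I := by
          by_contra hcon
          obtain ⟨w, hw, hw2⟩ := hId y' hcon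
          have := hNy' w hw2
          grind
        exact ⟨p, x', fun u hu => by grind⟩
      · have hy' : y' ∈ I := by
          have := hNy m hym
          grind
        have hx' : x' ∉ I := fun hh => hIc _ hh _ hy' d5
        obtain ⟨w, hw1, hw2, hw3⟩ := hnR x (hTR x d7) hxI
        have hpI : p ∈ I := by
          have := hNx w hw3
          grind
        exact ⟨x, x', fun u hu => by grind⟩
  -- remaining vertices: at most two conflicts among themselves
  have hdeg : ∀ v, v ∉ R → ∀ a b c, a ∉ R → b ∉ R → c ∉ R → G.Adj v a → G.Adj v b →
      G.Adj v c → a = b ∨ a = c ∨ b = c := by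
    intro v hv a b c ha hb hc hva hvb hvc
    by_cases hT : T v
    · obtain ⟨r, hr1, hr2⟩ := exists_rm h rep hrep2 v hT
      have hr2 : r ∈ R := hr2
      have := h.h3 v a b c r hva hvb hvc hr1
      grind
    · exact h.h2 v a b c hT hva hvb hvc
  have hcommon : ∀ u w v, u ∉ R → v ∉ R → u ≠ v → G.Adj u w → G.Adj w v →
      G.Adj u v ∨ ∃ w', w' ∉ R ∧ G.Adj u w' ∧ G.Adj w' v := by
    intro u w v hu hv huv huw hwv
    by_cases hw : w ∈ R
    · rcases hw with h1 | ⟨x, z, h1⟩ | ⟨x, x', y', h1⟩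
      · right
        have h2 : rep w ∈ M := ⟨h1.1.twin h (hrep w), (hrr w).symm⟩
        exact ⟨rep w, hI0R (Or.inl h2), ((hrep w u).2 huw.symm).symm, (hrep w v).2 hwv⟩
      · left
        obtain ⟨c1, c2, c3, c4, c5, c6⟩ := h1
        have k1 := h.h2 w x z u c1 c3 c4 huw.symm
        have k2 := h.h2 w x z v c1 c3 c4 hwv
        have := c5.symm
        have := c5.ne
        grind
      · exfalso
        obtain ⟨d1, d2, d3, d4, d5, d6, d7, d8, d9, d10, d11, d12⟩ := h1
        have hy'R : y' ∈ R := by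
          refine Or.inr (Or.inr ⟨x', x, w, d9, ?_, d5.symm, d4.symm, d3.symm, d6.symm, d8, d7,
            d1, d11.symm, d10.symm, fun t ht ht' => d12 t ht' ht⟩)
          rintro ⟨_, _, c, hc1, hc2⟩
          have hcw : G.Adj c w := (hc2 w).2 d6
          have hcx' : G.Adj c x' := (hc2 x').2 d5.symm
          have := h.h2 w x y' c d1 d3 d6.symm hcw.symm
          have : c = x := by grind
          subst this
          exact d9 (h.hT _ _ hc2 d7)
        have k1 := h.h2 w x y' u d1 d3 d6.symm huw.symm
        have k2 := h.h2 w x y' v d1 d3 d6.symm hwv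
        grind
    · exact Or.inr ⟨w, hw, huw, hwv⟩
  let HB : V → V → Prop := fun u v => u ∉ R ∧ v ∉ R ∧ H u v
  have hB : ∀ v, ∃ a b, ∀ u, HB v u → u = a ∨ u = b := by
    intro v
    by_cases hv : v ∉ R ∧ v ∉ I
    swap
    · exact ⟨v, v, fun u hu => absurd ⟨hu.1, hu.2.2.2.1⟩ hv⟩
    obtain ⟨hvR, hvI⟩ := hv
    -- contribution of one neighbour
    have hcon : ∀ n, ∃ a, n ∉ R → G.Adj v n → ∀ u, HB v u →
        (u = n ∨ G.Adj n u) → u = a := by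
      intro n
      by_cases hnI : n ∈ I
      · by_cases hex : ∃ a, a ∉ R ∧ a ≠ v ∧ G.Adj n a
        · obtain ⟨a, ha1, ha2, ha3⟩ := hex
          refine ⟨a, fun hn hvn u hu hnu => ?_⟩
          obtain ⟨_, hu2, hu3, _, hu4, _⟩ := hu
          rcases hnu with rfl | hnu
          · exact absurd hnI hu4
          · have := hdeg n hn v a u hvR ha1 hu2 hvn.symm ha3 hnu
            grind
        · refine ⟨v, fun hn hvn u hu hnu => ?_⟩
          obtain ⟨_, hu2, hu3, _, hu4, _⟩ := hu
          rcases hnu with rfl | hnu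
          · exact absurd hnI hu4
          · exact absurd ⟨u, hu2, hu3.symm, hnu⟩ hex
      · refine ⟨n, fun hn hvn u hu hnu => ?_⟩
        obtain ⟨_, hu2, hu3, _, hu4, _⟩ := hu
        rcases hnu with rfl | hnu
        · rfl
        · exfalso
          obtain ⟨w, hw1, hw2, hw3⟩ := hnR n hn hnI
          have := hdeg n hn v u w hvR hu2 hw2 hvn.symm hnu hw3
          grind
    have hn12 : ∃ n1 n2, ∀ n, n ∉ R → G.Adj v n → n = n1 ∨ n = n2 := by
      obtain ⟨n1, _, hn1, hv1⟩ := hnR v hvR hvI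
      by_cases hex : ∃ n2, n2 ∉ R ∧ n2 ≠ n1 ∧ G.Adj v n2
      · obtain ⟨n2, h1, h2, h3⟩ := hex
        refine ⟨n1, n2, fun n hn hvn => ?_⟩
        have := hdeg v hvR n1 n2 n hn1 h1 hn hv1 h3 hvn
        grind
      · refine ⟨n1, n1, fun n hn hvn => ?_⟩
        by_contra hcon
        exact hex ⟨n, hn, by grind, hvn⟩
    obtain ⟨n1, n2, hn⟩ := hn12
    obtain ⟨a, ha⟩ := hcon n1
    obtain ⟨b, hb⟩ := hcon n2
    refine ⟨a, b, fun u hu => ?_⟩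
    have hmain : ∃ n, n ∉ R ∧ G.Adj v n ∧ (u = n ∨ G.Adj n u) := by
      obtain ⟨_, hu2, hu3, _, hu4, hu5⟩ := id hu
      rcases hu5 with hu5 | ⟨w, hw1, hw2⟩
      · exact ⟨u, hu2, hu5, Or.inl rfl⟩
      · rcases hcommon v w u hvR hu2 hu3 hw1 hw2 with h1 | ⟨w', h1, h2, h3⟩
        · exact ⟨u, hu2, h1, Or.inl rfl⟩
        · exact ⟨w', h1, h2, Or.inr h3⟩
    obtain ⟨n, k1, k2, k3⟩ := hmain
    rcases hn n k1 k2 with rfl | rfl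
    · exact Or.inl (ha k1 k2 u hu k3)
    · exact Or.inr (hb k1 k2 u hu k3)
  have hsymm : ∀ u v, H u v → H v u := by
    rintro u v ⟨h1, h2, h3, h4⟩
    refine ⟨h1.symm, h3, h2, ?_⟩
    rcases h4 with h4 | ⟨w, h4, h5⟩
    · exact Or.inl h4.symm
    · exact Or.inr ⟨w, h5.symm, h4.symm⟩
  have hirr : ∀ u, ¬ H u u := fun u hu => hu.1 rfl
  haveI := Fintype.ofFinite V
  obtain ⟨c1, hc1⟩ := ext_col HB (fun u v hu => ⟨hu.2.1, hu.1, hsymm _ _ hu.2.2⟩)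
    (fun u hu => hirr u hu.2.2) ∅ (fun _ => 0) (by simp) Finset.univ (fun v _ => hB v)
  obtain ⟨c2, hc2⟩ := ext_col H hsymm hirr Rᶜ c1
    (fun u hu v hv huv => hc1 u v (by simp) (by simp) ⟨hu, hv, huv⟩)
    (Finset.univ.filter (fun v => v ∈ R ∧ v ∉ I))
    (fun v hv => hD v (by simp at hv; exact hv.1) (by simp at hv; exact hv.2))
  have hc3 : ∀ u v, H u v → c2 u ≠ c2 v := by
    intro u v huv
    refine hc2 u v ?_ ?_ huv
    · have := huv.2.1
      by_cases hu : u ∈ R <;> simp [hu, this]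
    · have := huv.2.2.1
      by_cases hu : v ∈ R <;> simp [hu, this]
  refine ⟨fun v => if v ∈ I then 0 else (c2 v).succ, fun u v huv => ?_, fun u w v h1 h2 h3 => ?_⟩
  · by_cases hu : u ∈ I <;> by_cases hv : v ∈ I
    · exact absurd huv (hIc u hu v hv)
    · simpa [hu, hv] using (Fin.succ_ne_zero _).symm
    · simp [hu, hv]
    · simpa [hu, hv] using hc3 u v ⟨huv.ne, hu, hv, Or.inl huv⟩
  · by_cases hu : u ∈ I <;> by_cases hv : v ∈ I
    · simp [hu]
    · simp [hu]
    · simp [hu, hv]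
    · have := hc3 u v ⟨h3, hu, hv, Or.inr ⟨w, h1, h2⟩⟩
      simp [hu, hv, this]

theorem hyp_of {V : Type*} [Fintype V] (G : SimpleGraph V) [DecidableRel G.Adj]
    (hsub : Subcubic G) (hsat : Saturated G 1)
    (hgirth : ∀ v : V, G.degree v = 3 →
      ∃ w : G.Walk v v, w.IsCycle ∧ w.length ≤ 4) : Hyp G (fun v => G.degree v = 3) := by
  classical
  refine ⟨?_, ?_, ?_, ?_, ?_, ?_⟩
  · intro v a b c hv ha hb hc
    by_contra hcon
    push Not at hcon
    have h1 : 2 < (G.neighborFinset v).card := Finset.two_lt_card_iff.2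
      ⟨a, b, c, by simpa using ha, by simpa using hb, by simpa using hc, hcon⟩
    rw [card_neighborFinset_eq_degree] at h1
    have := hsub v
    omega
  · intro v a b c d ha hb hc hd
    by_contra hcon
    push Not at hcon
    obtain ⟨n1, n2, n3, n4, n5, n6⟩ := hcon
    have h1 : ({a, b, c, d} : Finset V) ⊆ G.neighborFinset v := by
      intro x hx
      simp only [Finset.mem_insert, Finset.mem_singleton] at hx
      rw [mem_neighborFinset]
      rcases hx with rfl | rfl | rfl | rfl <;> assumption
    have h2 := Finset.card_le_card h1
    rw [card_neighborFinset_eq_degree] at h2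
    have h3 : ({a, b, c, d} : Finset V).card = 4 := by
      simp [*]
    have := hsub v
    omega
  · intro v a b hv
    have h1 : ({a, b} : Finset V).card < (G.neighborFinset v).card := by
      rw [card_neighborFinset_eq_degree, hv]
      exact lt_of_le_of_lt Finset.card_le_two (by norm_num)
    obtain ⟨p, hp1, hp2⟩ := Finset.exists_mem_notMem_of_card_lt_card h1
    simp only [Finset.mem_insert, Finset.mem_singleton, not_or] at hp2
    exact ⟨p, by simpa using hp1, hp2.1, hp2.2⟩
  · intro u v huv hu
    have : G.neighborFinset v = G.neighborFinset u := by
      ext w; simp [huv w]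
    rw [← card_neighborFinset_eq_degree] at hu ⊢
    rw [this, hu]
  · intro v a b hv ha hb hTa hTb
    exact Finset.card_le_one.1 (hsat v hv) a (by simpa using ⟨ha, hTa⟩) b
      (by simpa using ⟨hb, hTb⟩)
  · intro v hv
    obtain ⟨w, hw, hl⟩ := hgirth v hv
    have h3 := hw.three_le_length
    have hn := hw.support_nodup
    match w, hl, h3, hn with
    | .cons h1 (.cons h2 (.cons h3 .nil)), _, _, _ => exact Or.inl ⟨_, _, h1, h2, h3⟩
    | .cons h1 (.cons h2 (.cons h3 (.cons h4 .nil))), _, _, hn =>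
      right
      refine ⟨_, _, _, h1, h2, h3, h4, ?_, ?_⟩
      · simp at hn; grind
      · simp at hn; grind
    | .nil, _, h, _ => simp at h
    | .cons _ .nil, _, h, _ => simp at h
    | .cons _ (.cons _ .nil), _, h, _ => simp at h
    | .cons _ (.cons _ (.cons _ (.cons _ (.cons _ _)))), h, _, _ => simp at h; omega

/-- Every 1-saturated subcubic graph in which every 3-vertex lies on a cycle of
length at most 4 admits a (1,2,2,2)-packing coloring. -/
theorem stmt_13 {V : Type*} [Fintype V] (G : SimpleGraph V) [DecidableRel G.Adj]
    (hsub : Subcubic G) (hsat : Saturated G 1)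
    (hgirth : ∀ v : V, G.degree v = 3 →
      ∃ w : G.Walk v v, w.IsCycle ∧ w.length ≤ 4) :
    ∃ c : V → Fin 4, IsPackingColoring G ![1, 2, 2, 2] c := by
  obtain ⟨c, hc1, hc2⟩ := core G _ (hyp_of G hsub hsat hgirth)
  refine ⟨c, fun u v huv hcuv hr => ?_⟩
  have h0 : G.dist u v ≠ 0 := fun h => huv (hr.dist_eq_zero_iff.1 h)
  have h1 : G.dist u v ≠ 1 := fun h => hc1 u v (dist_eq_one_iff_adj.1 h) hcuv
  have h2 : G.dist u v = 2 → c u = 0 := by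
    intro h
    obtain ⟨w, hw⟩ := hr.exists_walk_length_eq_dist
    rw [h] at hw
    match w, hw with
    | .cons a1 (.cons a2 .nil), _ => exact hc2 _ _ _ a1 a2 huv hcuv
  by_cases h3 : c u = 0
  · have : (![1, 2, 2, 2] : Fin 4 → ℕ) (c u) = 1 := by rw [h3]; rfl
    omega
  · have : ∀ i : Fin 4, (![1, 2, 2, 2] : Fin 4 → ℕ) i ≤ 2 := by decide
    have := this (c u)
    have : G.dist u v ≠ 2 := fun h => h3 (h2 h)
    omega
end
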